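/- arXiv:1710.11402 — 2 statements merged into one kernel-verified Lean document; each statement's English description precedes it below -/
import Mathlib

section
/- Let α ≥ 0 and let μ be a probability measure on [0,∞) with regularly varying tail of index −α. Then μ is Boolean-subexponential: for every integer n ≥ 1, if ρ is a probability measure on ℝ such that K_ρ(z) = n·K_μ(z) for all z ∈ ℂ⁺ (so that ρ = μ^{⊎n} is the n-fold additive Boolean convolution power of μ), then ρ(y,∞)/(n·μ(y,∞)) → 1 as y → ∞. -/
open MeasureTheory Filter Set Complex

noncomputable section

/-- The Cauchy transform of a measure `τ` on `ℝ`: `G_τ(z) = ∫ 1/(z − t) dτ(t)`. -/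
def cauchyG (τ : Measure ℝ) (z : ℂ) : ℂ := ∫ t, (z - (t : ℂ))⁻¹ ∂τ

/-- The K-transform `K_τ(z) = z − 1/G_τ(z)`. -/
def Ktrans (τ : Measure ℝ) (z : ℂ) : ℂ := z - (cauchyG τ z)⁻¹

/-- `μ` has a regularly varying tail of index `−α`. -/
def RegVarTail (μ : Measure ℝ) (α : ℝ) : Prop :=
  (∀ x : ℝ, 0 ≤ x → 0 < μ (Set.Ioi x)) ∧
  ∀ t : ℝ, 0 < t →
    Filter.Tendsto (fun x : ℝ => (μ (Set.Ioi (t * x))).toReal / (μ (Set.Ioi x)).toReal)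
      Filter.atTop (nhds (t ^ (-α)))

def sg (τ : Measure ℝ) (y : ℝ) : Measure ℝ := (τ.restrict {0}ᶜ).map (fun t => y / t)

def St (σ : Measure ℝ) (w : ℂ) : ℂ := ∫ s, ((s : ℂ) - w)⁻¹ ∂σ

instance sg_fin (τ : Measure ℝ) [IsFiniteMeasure τ] (y : ℝ) : IsFiniteMeasure (sg τ y) := by
  unfold sg; infer_instance

lemma inv_bound (s : ℝ) (w : ℂ) (hw : w.im ≠ 0) : ‖((s : ℂ) - w)⁻¹‖ ≤ |w.im|⁻¹ := by
  rw [norm_inv]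
  apply inv_anti₀ (abs_pos.2 hw)
  have := Complex.abs_im_le_norm ((s : ℂ) - w)
  simpa using this

lemma meas_inv (w : ℂ) : Measurable (fun s : ℝ => ((s : ℂ) - w)⁻¹) := by fun_prop

lemma integrable_inv (σ : Measure ℝ) [IsFiniteMeasure σ] (w : ℂ) (hw : w.im ≠ 0) :
    Integrable (fun s : ℝ => ((s : ℂ) - w)⁻¹) σ :=
  Integrable.of_bound (meas_inv w).aestronglyMeasurable _ (ae_of_all _ fun s => inv_bound s w hw)

lemma St_bound (σ : Measure ℝ) [IsFiniteMeasure σ] (w : ℂ) (hw : w.im ≠ 0) :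
    ‖St σ w‖ ≤ σ.real univ / |w.im| := by
  have := norm_integral_le_of_norm_le_const (μ := σ) (f := fun s : ℝ => ((s : ℂ) - w)⁻¹)
    (ae_of_all _ fun s => inv_bound s w hw)
  unfold St
  rw [div_eq_inv_mul]
  exact this

lemma St_conj (σ : Measure ℝ) (w : ℂ) :
    St σ ((starRingEnd ℂ) w) = (starRingEnd ℂ) (St σ w) := by
  unfold St
  rw [← integral_conj]
  congr 1
  ext s
  simp

lemma St_diff (σ : Measure ℝ) [IsFiniteMeasure σ] (w : ℂ) (d : ℝ) (hd : 0 < d)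
    (h : ∀ᵐ (s : ℝ) ∂σ, d ≤ ‖(s : ℂ) - w‖) : DifferentiableAt ℂ (St σ) w := by
  have key := hasDerivAt_integral_of_dominated_loc_of_deriv_le (μ := σ) (𝕜 := ℂ)
    (F := fun (x : ℂ) (s : ℝ) => ((s : ℂ) - x)⁻¹)
    (F' := fun (x : ℂ) (s : ℝ) => (((s : ℂ) - x) ^ 2)⁻¹) (x₀ := w)
    (bound := fun _ => ((d / 2) ^ 2)⁻¹) (s := Metric.ball w (d / 2))
    (Metric.ball_mem_nhds w (by positivity))
    (Eventually.of_forall fun x => (meas_inv x).aestronglyMeasurable)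
    ?_ ?_ ?_ (integrable_const _) ?_
  · exact key.2.differentiableAt
  · apply Integrable.of_bound (meas_inv w).aestronglyMeasurable (d⁻¹)
    filter_upwards [h] with s hs
    rw [norm_inv]
    exact inv_anti₀ hd hs
  · apply Measurable.aestronglyMeasurable; fun_prop
  · filter_upwards [h] with s hs x hx
    rw [norm_inv, norm_pow]
    apply inv_anti₀ (by positivity)
    apply pow_le_pow_left₀ (by positivity)
    have h1 : ‖x - w‖ < d / 2 := by simpa [dist_eq_norm] using hx
    have h2 : ‖(s : ℂ) - w‖ ≤ ‖(s : ℂ) - x‖ + ‖x - w‖ := by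
      have := norm_add_le ((s : ℂ) - x) (x - w)
      simpa using this
    linarith
  · filter_upwards [h] with s hs x hx
    have h1 : ‖x - w‖ < d / 2 := by simpa [dist_eq_norm] using hx
    have h2 : ‖(s : ℂ) - w‖ ≤ ‖(s : ℂ) - x‖ + ‖x - w‖ := by
      have := norm_add_le ((s : ℂ) - x) (x - w)
      simpa using this
    have h3 : (s : ℂ) - x ≠ 0 := by
      intro h0
      rw [h0, norm_zero] at h2
      linarith
    have := ((hasDerivAt_id x).const_sub (s : ℂ)).fun_inv h3
    simpa using this

lemma G_eq (τ : Measure ℝ) [IsProbabilityMeasure τ] (y : ℝ) (hy : 0 < y) (w : ℂ)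
    (hw : w.im ≠ 0) :
    cauchyG τ (y / w) = (w / y) * (1 + w * St (sg τ y) w) := by
  have hw0 : w ≠ 0 := by rintro rfl; simp at hw
  have hy0 : (y : ℂ) ≠ 0 := by exact_mod_cast hy.ne'
  have hm : Measurable (fun t : ℝ => y / t) := by fun_prop
  have e1 : St (sg τ y) w = ∫ t, ({0}ᶜ : Set ℝ).indicator (fun t : ℝ => (((y / t : ℝ) : ℂ) - w)⁻¹) t ∂τ := by
    unfold St sg
    rw [integral_map hm.aemeasurable (meas_inv w).aestronglyMeasurable,
      integral_indicator (measurableSet_singleton 0).compl]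
  have hint : Integrable (({0}ᶜ : Set ℝ).indicator (fun t : ℝ => (((y / t : ℝ) : ℂ) - w)⁻¹)) τ := by
    apply Integrable.indicator _ (measurableSet_singleton 0).compl
    refine Integrable.of_bound (Measurable.aestronglyMeasurable (by fun_prop)) (|w.im|⁻¹) (ae_of_all _ fun s => inv_bound _ w hw)
  have e2 : (w / y) * (1 + w * St (sg τ y) w) = ∫ t, (w / y) * (1 + w * ({0}ᶜ : Set ℝ).indicator (fun t : ℝ => (((y / t : ℝ) : ℂ) - w)⁻¹) t) ∂τ := by
    rw [integral_const_mul, integral_add (integrable_const _) (hint.const_mul _), integral_const_mul, e1]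
    simp
  rw [e2]
  unfold cauchyG
  congr 1
  ext t
  by_cases ht : t = 0
  · subst ht; simp
  · have ht0 : (t : ℂ) ≠ 0 := by exact_mod_cast ht
    have h1 : (y : ℂ) - t * w ≠ 0 := by
      intro h
      have := congrArg Complex.im h
      simp [ht, hw] at this
    have h2 : (y : ℂ) / t - w ≠ 0 := by
      intro h; apply h1; field_simp at h; linear_combination h
    have h3 : (y : ℂ) / w - t ≠ 0 := by
      intro h; apply h1; field_simp at h; linear_combination h
    rw [indicator_of_mem (by simpa using ht)]
    push_cast
    field_simp
    rw [show (y : ℂ) - w * t = y - t * w by ring]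
    field_simp
    ring

lemma rel_neg (μ ρ : Measure ℝ) [IsProbabilityMeasure μ] [IsProbabilityMeasure ρ] (n : ℕ)
    (hK : ∀ z : ℂ, 0 < z.im → Ktrans ρ z = (n : ℂ) * Ktrans μ z) (y : ℝ) (hy : 0 < y) (w : ℂ)
    (hw : w.im < 0) :
    St (sg ρ y) w * (1 - (n - 1) * w * St (sg μ y) w) = n * St (sg μ y) w := by
  have hw0 : w ≠ 0 := by rintro rfl; simp at hw
  have hy0 : (y : ℂ) ≠ 0 := by exact_mod_cast hy.ne'
  have hz : 0 < ((y : ℂ) / w).im := by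
    rw [Complex.div_im]
    simp only [ofReal_im, ofReal_re, zero_mul, zero_div, zero_sub]
    have : 0 < Complex.normSq w := Complex.normSq_pos.2 hw0
    have : y * w.im / Complex.normSq w < 0 := div_neg_of_neg_of_pos (mul_neg_of_pos_of_neg hy hw) this
    linarith
  have hG : ∀ (τ : Measure ℝ) [IsProbabilityMeasure τ], 1 + w * St (sg τ y) w ≠ 0 := by
    intro τ _ h0
    have h1 := G_eq τ y hy w hw.ne
    rw [h0, mul_zero] at h1
    set z := (y : ℂ) / w
    have hzs : ∀ t : ℝ, z - t ≠ 0 := fun t h => by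
      have := congrArg Complex.im h
      simp at this
      exact hz.ne' this
    have hint : Integrable (fun t : ℝ => (z - (t : ℂ))⁻¹) τ := by
      have := (integrable_inv τ z hz.ne').neg
      refine this.congr (ae_of_all _ fun t => ?_)
      simp only [Pi.neg_apply]
      rw [← inv_neg]; congr 1; ring
    have h2 : ∫ t, -((z - (t : ℂ))⁻¹).im ∂τ = 0 := by
      rw [integral_neg]
      have h3 := integral_im (𝕜 := ℂ) hint
      simp only [RCLike.im_to_complex] at h3
      rw [h3]
      unfold cauchyG at h1
      rw [h1]; simp
    have hpos : ∀ t : ℝ, 0 < -((z - (t : ℂ))⁻¹).im := by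
      intro t
      rw [Complex.inv_im]
      have : 0 < Complex.normSq (z - t) := Complex.normSq_pos.2 (hzs t)
      have h5 : (z - (t : ℂ)).im = z.im := by simp
      rw [h5, neg_div, neg_neg]
      positivity
    have h6 := (integral_pos_iff_support_of_nonneg (μ := τ) (f := fun t : ℝ => -((z - (t : ℂ))⁻¹).im)
      (fun t => (hpos t).le) hint.im.neg).2 (by
        rw [show Function.support (fun t : ℝ => -((z - (t : ℂ))⁻¹).im) = univ from
          eq_univ_of_forall fun t => (hpos t).ne']
        simp)
    linarith
  have h := hK _ hz
  unfold Ktrans at h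
  rw [G_eq μ y hy w hw.ne, G_eq ρ y hy w hw.ne] at h
  have a1 := hG μ
  have a2 := hG ρ
  set A := St (sg μ y) w
  set B := St (sg ρ y) w
  field_simp at h
  have h' : w * (B * (1 - (n - 1) * w * A)) = w * (n * A) := by linear_combination h
  exact mul_left_cancel₀ hw0 h'

lemma rel (μ ρ : Measure ℝ) [IsProbabilityMeasure μ] [IsProbabilityMeasure ρ] (n : ℕ)
    (hK : ∀ z : ℂ, 0 < z.im → Ktrans ρ z = (n : ℂ) * Ktrans μ z) (y : ℝ) (hy : 0 < y) (w : ℂ)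
    (hw : w.im ≠ 0) :
    St (sg ρ y) w * (1 - (n - 1) * w * St (sg μ y) w) = n * St (sg μ y) w := by
  rcases lt_or_gt_of_ne hw with h | h
  · exact rel_neg μ ρ n hK y hy w h
  · have := rel_neg μ ρ n hK y hy ((starRingEnd ℂ) w) (by simpa using h)
    rw [St_conj, St_conj] at this
    have := congrArg (starRingEnd ℂ) this
    simpa using this

def kf (c r : ℝ) (q : ℂ → ℂ) (w : ℂ) : ℂ := ((w - c) ^ 2 - r ^ 2) ^ 3 * q w

lemma kf_diff (c r : ℝ) (q : ℂ → ℂ) (hq : Differentiable ℂ q) : Differentiable ℂ (kf c r q) := by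
  unfold kf; fun_prop

lemma kf_norm (c r : ℝ) (q : ℂ → ℂ) (w : ℂ) (hw : ‖w - c‖ = r) :
    ‖kf c r q w‖ = 8 * r ^ 3 * |w.im| ^ 3 * ‖q w‖ := by
  have h1 : (w - c) ^ 2 - (r : ℂ) ^ 2 = (w - c) * (2 * Complex.I * w.im) := by
    have h2 : (r : ℂ) ^ 2 = (w - c) * (starRingEnd ℂ) (w - c) := by
      rw [Complex.mul_conj, Complex.normSq_eq_norm_sq, hw]; push_cast; rfl
    rw [h2]
    have h3 : (w - c) - (starRingEnd ℂ) (w - c) = 2 * Complex.I * w.im := by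
      rw [Complex.sub_conj]; simp; ring
    rw [← h3]; ring
  unfold kf
  rw [h1, norm_mul, norm_pow, norm_mul, norm_mul, norm_mul, hw, Complex.norm_I, Complex.norm_real,
    Real.norm_eq_abs, Complex.norm_ofNat]
  ring

lemma circle_cauchy (c r : ℝ) (hr : 0 < r) (q : ℂ → ℂ) (hq : Differentiable ℂ q) (s : ℝ) :
    (∮ w in C(c, r), kf c r q w * ((s : ℂ) - w)⁻¹) =
      (Ioo (c - r) (c + r)).indicator (fun s : ℝ => -(2 * Real.pi * Complex.I) * kf c r q s) s := by
  have hk := kf_diff c r q hq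
  have hdist : ‖(s : ℂ) - c‖ = |s - c| := by
    rw [← Complex.ofReal_sub, Complex.norm_real, Real.norm_eq_abs]
  rcases lt_trichotomy |s - c| r with h | h | h
  · rw [indicator_of_mem (by rw [abs_lt] at h; constructor <;> linarith [h.1, h.2])]
    have := hk.neg.diffContOnCl.circleIntegral_sub_inv_smul (c := (c : ℂ)) (R := r) (w := (s : ℂ))
      (by simpa [dist_eq_norm, hdist] using h)
    rw [show (-(2 * Real.pi * Complex.I) * kf c r q s) = (2 * Real.pi * Complex.I) • (-kf c r q) s by simp,
      ← this]
    congr 1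
    ext w
    rw [smul_eq_mul, ← neg_sub w (s : ℂ), inv_neg, Pi.neg_apply]; ring
  · rw [indicator_of_notMem (by
      rintro ⟨h1, h2⟩
      have : |s - c| < r := by rw [abs_lt]; constructor <;> linarith
      linarith)]
    have h2 : (r : ℂ) ^ 2 = (s - c) ^ 2 := by
      rw [← h]; norm_cast; exact sq_abs _
    have e : ∀ w : ℂ, kf c r q w * ((s : ℂ) - w)⁻¹ =
        -((w - s) ^ 2 * (w + s - 2 * c) ^ 3 * q w) := by
      intro w
      unfold kf
      rw [h2]
      by_cases hws : (s : ℂ) - w = 0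
      · have : w - s = 0 := by linear_combination -hws
        rw [hws, this]; simp
      · field_simp
        ring
    simp_rw [e]
    apply Complex.circleIntegral_eq_zero_of_differentiable_on_off_countable hr.le countable_empty
    · apply Continuous.continuousOn
      have := hq.continuous
      fun_prop
    · intro z _
      have := hq z
      fun_prop
  · rw [indicator_of_notMem (by
      rintro ⟨h1, h2⟩
      have : |s - c| < r := by rw [abs_lt]; constructor <;> linarith
      linarith)]
    have hne : ∀ w ∈ Metric.closedBall (c : ℂ) r, (s : ℂ) - w ≠ 0 := by
      intro w hw h0
      have : (s : ℂ) = w := by linear_combination h0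
      rw [← this] at hw
      simp [dist_eq_norm, hdist] at hw
      linarith
    apply Complex.circleIntegral_eq_zero_of_differentiable_on_off_countable hr.le countable_empty
    · intro w hw
      exact (hk.continuous.continuousAt.mul
        ((continuousAt_const.sub continuousAt_id).inv₀ (hne w hw))).continuousWithinAt
    · intro w hw
      exact (hk w).mul (((differentiableAt_const _).sub differentiableAt_id).inv
        (hne w (Metric.ball_subset_closedBall hw.1)))

lemma kf_bounded (c r : ℝ) (q : ℂ → ℂ) (hq : Differentiable ℂ q) :
    ∃ B : ℝ, 0 ≤ B ∧ ∀ w : ℂ, ‖w - c‖ = r → ‖q w‖ ≤ B := by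
  obtain ⟨B, hB⟩ := (isCompact_sphere (c : ℂ) r).exists_bound_of_continuousOn
    hq.continuous.continuousOn
  exact ⟨max B 0, le_max_right _ _, fun w hw => (hB w (by simpa [dist_eq_norm] using hw)).trans (le_max_left _ _)⟩

lemma prod_int (σ : Measure ℝ) [IsFiniteMeasure σ] (c r : ℝ) (hr : 0 < r) (q : ℂ → ℂ)
    (hq : Differentiable ℂ q) :
    Integrable (fun p : ℝ × ℝ => deriv (circleMap c r) p.1 •
      (kf c r q (circleMap c r p.1) * ((p.2 : ℂ) - circleMap c r p.1)⁻¹))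
      ((volume.restrict (Ioc 0 (2 * Real.pi))).prod σ) := by
  obtain ⟨B, hB0, hB⟩ := kf_bounded c r q hq
  have hk := (kf_diff c r q hq).continuous
  have hcm := continuous_circleMap c r
  refine Integrable.of_bound ?_ (r * (8 * r ^ 3 * r ^ 2 * B)) (ae_of_all _ fun p => ?_)
  · apply Measurable.aestronglyMeasurable
    simp only [deriv_circleMap, smul_eq_mul]
    have m1 : Measurable (fun p : ℝ × ℝ => circleMap c r p.1) := hcm.measurable.comp measurable_fst
    have m2 : Measurable (fun p : ℝ × ℝ => circleMap 0 r p.1) :=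
      (continuous_circleMap 0 r).measurable.comp measurable_fst
    have m3 : Measurable (fun p : ℝ × ℝ => kf c r q (circleMap c r p.1)) := hk.measurable.comp m1
    fun_prop
  · obtain ⟨θ, s⟩ := p
    simp only [norm_smul, norm_mul]
    set w := circleMap c r θ with hwd
    have hw : ‖w - c‖ = r := by rw [hwd]; simp [circleMap_sub_center, abs_of_pos hr]
    have h1 : ‖deriv (circleMap c r) θ‖ = r := by simp [deriv_circleMap, abs_of_pos hr]
    rw [h1]
    apply mul_le_mul_of_nonneg_left _ hr.le
    rw [kf_norm c r q w hw]
    by_cases h0 : w.im = 0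
    · rw [h0]; simp; positivity
    · have h2 := inv_bound s w h0
      have h3 : |w.im| ≤ r := by
        have := Complex.abs_im_le_norm (w - c)
        rw [hw] at this; simpa using this
      have h4 : 0 < |w.im| := abs_pos.2 h0
      calc 8 * r ^ 3 * |w.im| ^ 3 * ‖q w‖ * ‖((s : ℂ) - w)⁻¹‖
          ≤ 8 * r ^ 3 * |w.im| ^ 3 * B * |w.im|⁻¹ := by
            gcongr
            exact hB w hw
        _ = 8 * r ^ 3 * |w.im| ^ 2 * B := by field_simp
        _ ≤ _ := by gcongr

lemma circ_int (σ : Measure ℝ) [IsFiniteMeasure σ] (c r : ℝ) (hr : 0 < r) (q : ℂ → ℂ)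
    (hq : Differentiable ℂ q) :
    IntervalIntegrable (fun θ => deriv (circleMap c r) θ •
      (kf c r q (circleMap c r θ) * St σ (circleMap c r θ))) volume 0 (2 * Real.pi) := by
  rw [intervalIntegrable_iff, uIoc_of_le (by positivity)]
  have := (prod_int σ c r hr q hq).integral_prod_left
  refine this.congr (ae_of_all _ fun θ => ?_)
  simp only [smul_eq_mul, integral_const_mul, St]

lemma contour (σ : Measure ℝ) [IsFiniteMeasure σ] (c r : ℝ) (hr : 0 < r) (q : ℂ → ℂ)
    (hq : Differentiable ℂ q) :
    (∮ w in C(c, r), kf c r q w * St σ w) =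
      -(2 * Real.pi * Complex.I) * ∫ s in Ioo (c - r) (c + r), kf c r q (s : ℝ) ∂σ := by
  have h1 : (∮ w in C(c, r), kf c r q w * St σ w) =
      ∫ θ in Ioc 0 (2 * Real.pi), ∫ s, deriv (circleMap c r) θ •
      (kf c r q (circleMap c r θ) * ((s : ℂ) - circleMap c r θ)⁻¹) ∂σ := by
    rw [circleIntegral, intervalIntegral.integral_of_le (by positivity)]
    congr 1
    ext θ
    simp only [smul_eq_mul, integral_const_mul, St]
  rw [h1, integral_integral_swap (prod_int σ c r hr q hq), ← integral_const_mul,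
    ← integral_indicator measurableSet_Ioo]
  congr 1
  ext s
  rw [← circle_cauchy c r hr q hq s, circleIntegral, intervalIntegral.integral_of_le (by positivity)]

lemma circ_int' (σ : Measure ℝ) [IsFiniteMeasure σ] (c r : ℝ) (hr : 0 < r) (q : ℂ → ℂ)
    (hq : Differentiable ℂ q) : CircleIntegrable (fun w => kf c r q w * St σ w) c r := by
  rw [circleIntegrable_iff]
  exact circ_int σ c r hr q hq

lemma pointwise (n : ℕ) (hn : 1 ≤ n) (w S S1 S2 S' : ℂ) (v ε δ : ℝ) (hw : ‖w‖ = 1) (hv : 0 < v)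
    (hv1 : v ≤ 1) (hS : S = S1 + S2) (h2 : ‖S2‖ ≤ δ / v) (h1 : ‖S1‖ ≤ ε) (hS' : ‖S'‖ ≤ 1 / v)
    (hε : 0 ≤ ε) (hδ : 0 ≤ δ) (hne : n * ε ≤ 1 / 2) (hrel : S' * (1 - (n - 1) * w * S) = n * S) :
    ‖S * S' - S1 * (n * S1 / (1 - (n - 1) * w * S1))‖ ≤ 6 * n * δ * (ε + δ) / v ^ 3 := by
  have hn' : (1 : ℝ) ≤ n := by exact_mod_cast hn
  have hc : ‖(n : ℂ) - 1‖ ≤ n := by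
    rw [show (n : ℂ) - 1 = ((n - 1 : ℝ) : ℂ) by push_cast; rfl, Complex.norm_real, Real.norm_eq_abs,
      abs_of_nonneg (by linarith)]
    linarith
  have hnn : ‖(n : ℂ)‖ = n := by simp
  set D1 := 1 - ((n : ℂ) - 1) * w * S1 with hD1
  have hD1n : 1 / 2 ≤ ‖D1‖ := by
    have a1 : ‖((n : ℂ) - 1) * w * S1‖ ≤ 1 / 2 := by
      rw [norm_mul, norm_mul, hw, mul_one]
      calc _ ≤ n * ε := by gcongr
        _ ≤ _ := hne
    have a2 := norm_sub_norm_le (1 : ℂ) (((n : ℂ) - 1) * w * S1)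
    rw [norm_one] at a2
    linarith
  have hD1i : ‖D1⁻¹‖ ≤ 2 := by
    rw [norm_inv]
    calc ‖D1‖⁻¹ ≤ (1 / 2 : ℝ)⁻¹ := inv_anti₀ (by norm_num) hD1n
      _ = 2 := by norm_num
  have hD10 : D1 ≠ 0 := by
    intro h; rw [h, norm_zero] at hD1n; norm_num at hD1n
  set X := (n : ℂ) + (n - 1) * w * S' with hX
  have hXD : X * (1 - (n - 1) * w * S) = n := by
    rw [hX]; linear_combination (n - 1) * w * hrel
  have hXn : ‖X‖ ≤ 2 * n / v := by
    have a1 : ‖((n : ℂ) - 1) * w * S'‖ ≤ n / v := by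
      rw [norm_mul, norm_mul, hw, mul_one]
      calc _ ≤ n * (1 / v) := by gcongr
        _ = _ := by ring
    have a2 : (n : ℝ) ≤ n / v := by
      rw [le_div_iff₀ hv]; nlinarith
    calc ‖X‖ ≤ ‖(n : ℂ)‖ + ‖((n : ℂ) - 1) * w * S'‖ := norm_add_le _ _
      _ ≤ n / v + n / v := by rw [hnn]; linarith
      _ = _ := by ring
  have hD0 : (1 - ((n : ℂ) - 1) * w * S) ≠ 0 := by
    intro h; rw [h, mul_zero] at hXD
    have : (n : ℂ) ≠ 0 := by exact_mod_cast (by omega : n ≠ 0)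
    exact this hXD.symm
  have hdiff : S' - n * S1 / D1 = S2 * X * D1⁻¹ := by
    have e1 : S' = n * S / (1 - (n - 1) * w * S) := by rw [eq_div_iff hD0, hrel]
    have e2 : X = n / (1 - (n - 1) * w * S) := by rw [eq_div_iff hD0, hXD]
    rw [e2, e1]
    obtain ⟨D, hDd⟩ : ∃ D, D = 1 - ((n : ℂ) - 1) * w * S := ⟨_, rfl⟩
    rw [← hDd] at hD0 ⊢
    field_simp
    rw [hD1, hDd, hS]; ring
  have b1 : ‖S' - n * S1 / D1‖ ≤ 4 * n * δ / v ^ 2 := by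
    rw [hdiff, norm_mul, norm_mul]
    calc _ ≤ (δ / v) * (2 * n / v) * 2 := by gcongr
      _ = _ := by field_simp; ring
  have b2 : ‖n * S1 / D1‖ ≤ 2 * n * ε := by
    rw [div_eq_mul_inv, norm_mul, norm_mul, hnn]
    calc _ ≤ n * ε * 2 := by gcongr
      _ = _ := by ring
  have b3 : ‖S'‖ ≤ 2 * n * ε + 4 * n * δ / v ^ 2 := by
    calc ‖S'‖ = ‖n * S1 / D1 + (S' - n * S1 / D1)‖ := by congr 1; ring
      _ ≤ _ := (norm_add_le _ _).trans (add_le_add b2 b1)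
  have e : S * S' - S1 * (n * S1 / D1) = S2 * S' + S1 * (S' - n * S1 / D1) := by rw [hS]; ring
  rw [e]
  calc _ ≤ ‖S2‖ * ‖S'‖ + ‖S1‖ * ‖S' - n * S1 / D1‖ := by
        rw [← norm_mul, ← norm_mul]; exact norm_add_le _ _
    _ ≤ (δ / v) * (2 * n * ε + 4 * n * δ / v ^ 2) + ε * (4 * n * δ / v ^ 2) := by gcongr
    _ = (2 * n * ε * δ * v ^ 2 + 4 * n * δ * δ + 4 * n * ε * δ * v) / v ^ 3 := by field_simp
    _ ≤ _ := by
      apply div_le_div_of_nonneg_right _ (by positivity)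
      have p1 : 0 ≤ n * ε * δ := by positivity
      have p2 : 0 ≤ n * δ * δ := by positivity
      have p3 : v ^ 2 ≤ 1 := by nlinarith
      nlinarith [mul_le_mul_of_nonneg_left p3 p1, mul_le_mul_of_nonneg_left hv1 p1]

lemma err (σ σ' : Measure ℝ) [IsFiniteMeasure σ] [IsFiniteMeasure σ'] (n : ℕ) (hn : 1 ≤ n)
    (q : ℂ → ℂ) (hq : Differentiable ℂ q) (B : ℝ) (hB0 : 0 ≤ B) (hB : ∀ w : ℂ, ‖w‖ = 1 → ‖q w‖ ≤ B)
    (ε δ : ℝ) (hε : 0 ≤ ε) (hσ' : σ'.real univ ≤ 1)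
    (hrel : ∀ w : ℂ, w.im ≠ 0 → St σ' w * (1 - (n - 1) * w * St σ w) = n * St σ w)
    (h1 : ∀ w : ℂ, ‖w‖ ≤ 1 → ‖St (σ.restrict (Ici 2)) w‖ ≤ ε) (hne : n * ε ≤ 1 / 2)
    (hδ : σ.real (Iio 2) ≤ δ) :
    ‖(∫ s in Ioo (-1 : ℝ) 1, kf 0 1 q (s : ℝ) ∂σ') - n * ∫ s in Ioo (-1 : ℝ) 1, kf 0 1 q (s : ℝ) ∂σ‖
      ≤ 48 * B * n ^ 2 * δ * (ε + δ) := by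
  have hn' : (1 : ℝ) ≤ n := by exact_mod_cast hn
  have hδ0 : 0 ≤ δ := measureReal_nonneg.trans hδ
  have hc : ‖(n : ℂ) - 1‖ ≤ n := by
    rw [show (n : ℂ) - 1 = ((n - 1 : ℝ) : ℂ) by push_cast; rfl, Complex.norm_real, Real.norm_eq_abs,
      abs_of_nonneg (by linarith)]
    linarith
  have hk := kf_diff 0 1 q hq
  set S1 := St (σ.restrict (Ici 2)) with hS1
  have hd1 : ∀ w : ℂ, ‖w‖ ≤ 1 → DifferentiableAt ℂ S1 w := by
    intro w hw
    apply St_diff _ w 1 one_pos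
    filter_upwards [ae_restrict_mem measurableSet_Ici] with s hs
    have := norm_sub_norm_le (s : ℂ) w
    rw [Complex.norm_real, Real.norm_eq_abs] at this
    have h3 : (2 : ℝ) ≤ s := hs
    have h4 := le_abs_self s
    linarith
  have hD : ∀ w : ℂ, ‖w‖ ≤ 1 → (1 - ((n : ℂ) - 1) * w * S1 w) ≠ 0 := by
    intro w hw h0
    have a1 : ‖((n : ℂ) - 1) * w * S1 w‖ ≤ 1 / 2 := by
      rw [norm_mul, norm_mul]
      calc _ ≤ n * 1 * ε := by gcongr; exact h1 w hw
        _ ≤ _ := by linarith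
    have a2 : ((n : ℂ) - 1) * w * S1 w = 1 := by linear_combination -h0
    rw [a2, norm_one] at a1
    norm_num at a1
  set H : ℂ → ℂ := fun w => (n - 1) * kf 0 1 q w * w * (S1 w * (n * S1 w / (1 - (n - 1) * w * S1 w)))
    with hH
  have hHd : ∀ w : ℂ, ‖w‖ ≤ 1 → DifferentiableAt ℂ H w := by
    intro w hw
    have d1 := hd1 w hw
    have d2 := hk w
    have d3 := hD w hw
    rw [hH]
    fun_prop (disch := assumption)
  have hball : ∀ w ∈ Metric.closedBall ((0 : ℝ) : ℂ) 1, ‖w‖ ≤ 1 := by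
    intro w hw; simpa using hw
  have hHc : ContinuousOn H (Metric.closedBall ((0 : ℝ) : ℂ) 1) :=
    fun w hw => (hHd w (hball w hw)).continuousAt.continuousWithinAt
  have hH0 : (∮ w in C(((0 : ℝ) : ℂ), 1), H w) = 0 :=
    Complex.circleIntegral_eq_zero_of_differentiable_on_off_countable zero_le_one countable_empty hHc
      (fun w hw => hHd w (hball w (Metric.ball_subset_closedBall hw.1)))
  have c1 := circ_int' σ 0 1 one_pos q hq
  have c2 := circ_int' σ' 0 1 one_pos q hq
  have c3 : CircleIntegrable H ((0 : ℝ) : ℂ) 1 :=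
    (hHc.mono Metric.sphere_subset_closedBall).circleIntegrable zero_le_one
  have c4 : CircleIntegrable (fun w => (n : ℂ) • (kf 0 1 q w * St σ w)) ((0 : ℝ) : ℂ) 1 :=
    c1.const_smul
  have c5 : CircleIntegrable (fun w => kf 0 1 q w * St σ' w - (n : ℂ) • (kf 0 1 q w * St σ w)) ((0 : ℝ) : ℂ) 1 :=
    c2.sub c4
  have tot : (∮ w in C(((0 : ℝ) : ℂ), 1), (kf 0 1 q w * St σ' w - (n : ℂ) • (kf 0 1 q w * St σ w) - H w)) =
      -(2 * Real.pi * Complex.I) * ((∫ s in Ioo (-1 : ℝ) 1, kf 0 1 q (s : ℝ) ∂σ') - n * ∫ s in Ioo (-1 : ℝ) 1, kf 0 1 q (s : ℝ) ∂σ) := by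
    rw [circleIntegral.integral_sub c5 c3, circleIntegral.integral_sub c2 c4,
      circleIntegral.integral_smul, hH0, contour σ 0 1 one_pos q hq, contour σ' 0 1 one_pos q hq]
    simp only [zero_sub, zero_add, smul_eq_mul]
    ring
  have bd := circleIntegral.norm_integral_le_of_norm_le_const (c := ((0 : ℝ) : ℂ)) (R := 1)
    (f := fun w => (kf 0 1 q w * St σ' w - (n : ℂ) • (kf 0 1 q w * St σ w) - H w))
    (C := 48 * B * n ^ 2 * δ * (ε + δ)) zero_le_one ?_
  · rw [tot, norm_mul] at bd
    have e1 : ‖-(2 * (Real.pi : ℂ) * Complex.I)‖ = 2 * Real.pi := by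
      simp [abs_of_pos Real.pi_pos]
    rw [e1, mul_one] at bd
    exact le_of_mul_le_mul_left bd (by positivity)
  · intro w hw
    have hw1 : ‖w‖ = 1 := by simpa using hw
    have hwc : ‖w - ((0 : ℝ) : ℂ)‖ = 1 := by simpa using hw1
    have hkn := kf_norm 0 1 q w hwc
    by_cases him : w.im = 0
    · have : kf 0 1 q w = 0 := by
        rw [← norm_eq_zero, hkn, him]; simp
      simp only [hH, this]
      simp
      positivity
    · have hv : 0 < |w.im| := abs_pos.2 him
      have hv1 : |w.im| ≤ 1 := hw1 ▸ Complex.abs_im_le_norm w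
      have hS : St σ w = S1 w + St (σ.restrict (Iio 2)) w := by
        have := integral_add_compl (μ := σ) (measurableSet_Ici (a := (2 : ℝ))) (integrable_inv σ w him)
        rw [compl_Ici] at this
        exact this.symm
      have hS2 : ‖St (σ.restrict (Iio 2)) w‖ ≤ δ / |w.im| := by
        refine (St_bound _ w him).trans ?_
        rw [measureReal_restrict_apply_univ]
        gcongr
      have hS' : ‖St σ' w‖ ≤ 1 / |w.im| := (St_bound _ w him).trans (by gcongr)
      have P := pointwise n hn w _ _ _ _ |w.im| ε δ hw1 hv hv1 hS hS2 (h1 w hw1.le) hS' hε hδ0 hne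
        (hrel w him)
      have e : kf 0 1 q w * St σ' w - (n : ℂ) • (kf 0 1 q w * St σ w) - H w =
          (n - 1) * kf 0 1 q w * w * (St σ w * St σ' w - S1 w * (n * S1 w / (1 - (n - 1) * w * S1 w))) := by
        simp only [hH, smul_eq_mul]
        linear_combination kf 0 1 q w * hrel w him
      rw [e, norm_mul, norm_mul, norm_mul, hw1, mul_one, hkn]
      have hqB := hB w hw1
      calc _ ≤ (n : ℝ) * (8 * 1 ^ 3 * |w.im| ^ 3 * B) * (6 * n * δ * (ε + δ) / |w.im| ^ 3) := by
            gcongr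
        _ = _ := by field_simp; ring

lemma neg_null (σ σ' : Measure ℝ) [IsFiniteMeasure σ] [IsFiniteMeasure σ'] (n : ℕ) (hn : 1 ≤ n)
    (hσ : σ (Iic 0) = 0)
    (hrel : ∀ w : ℂ, w.im ≠ 0 → St σ' w * (1 - (n - 1) * w * St σ w) = n * St σ w) :
    σ' (Iio 0) = 0 := by
  have hn' : (1 : ℝ) ≤ n := by exact_mod_cast hn
  have hpos : ∀ᵐ s ∂σ, 0 < s := by
    rw [ae_iff]; convert hσ using 2; ext; simp
  have hSd : ∀ w : ℂ, w.re < 0 → DifferentiableAt ℂ (St σ) w := by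
    intro w hw
    apply St_diff _ w (-w.re) (by linarith)
    filter_upwards [hpos] with s hs
    have := (le_abs_self _).trans (Complex.abs_re_le_norm ((s : ℂ) - w))
    simp at this
    linarith
  have hD : ∀ w : ℂ, w.re < 0 → (1 - ((n : ℂ) - 1) * w * St σ w) ≠ 0 := by
    intro w hw h0
    have hint : Integrable (fun s : ℝ => w * ((s : ℂ) - w)⁻¹) σ := by
      apply Integrable.const_mul
      refine Integrable.of_bound (meas_inv w).aestronglyMeasurable ((-w.re)⁻¹) ?_
      filter_upwards [hpos] with s hs
      rw [norm_inv]
      apply inv_anti₀ (by linarith)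
      have := (le_abs_self _).trans (Complex.abs_re_le_norm ((s : ℂ) - w))
      simp at this
      linarith
    have h1 : (w * St σ w).re ≤ 0 := by
      unfold St
      rw [← integral_const_mul]
      have h3 := integral_re (𝕜 := ℂ) hint
      simp only [RCLike.re_to_complex] at h3
      rw [← h3]
      apply integral_nonpos_of_ae
      filter_upwards [hpos] with s hs
      have hne : 0 ≤ Complex.normSq ((s : ℂ) - w) := Complex.normSq_nonneg _
      simp only [Complex.mul_re, Complex.inv_re, Complex.inv_im, Pi.zero_apply]
      have : w.re * (((s : ℂ) - w).re / Complex.normSq ((s : ℂ) - w)) - w.im * (-((s : ℂ) - w).im / Complex.normSq ((s : ℂ) - w))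
          = (w.re * s - w.re ^ 2 - w.im ^ 2) / Complex.normSq ((s : ℂ) - w) := by
        simp; ring
      rw [this]
      apply div_nonpos_of_nonpos_of_nonneg _ hne
      nlinarith [sq_nonneg w.re, sq_nonneg w.im]
    have h2 := congrArg Complex.re h0
    rw [mul_assoc, show (n : ℂ) - 1 = ((n - 1 : ℝ) : ℂ) by push_cast; rfl, Complex.sub_re,
      Complex.re_ofReal_mul] at h2
    simp only [Complex.one_re, Complex.zero_re] at h2
    nlinarith
  apply measure_null_of_locally_null
  intro x hx
  have hx0 : x < 0 := hx
  set r := -x / 2 with hr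
  have hr0 : 0 < r := by rw [hr]; linarith
  refine ⟨Ioo (x - r) (x + r), mem_nhdsWithin_of_mem_nhds (Ioo_mem_nhds (by linarith) (by linarith)), ?_⟩
  have hq : Differentiable ℂ (fun _ : ℂ => (1 : ℂ)) := differentiable_const _
  have C := contour σ' x r hr0 (fun _ => 1) hq
  have hk := kf_diff x r _ hq
  have hball : ∀ w ∈ Metric.closedBall (x : ℂ) r, w.re < 0 := by
    intro w hw
    rw [Metric.mem_closedBall, dist_eq_norm] at hw
    have := ((le_abs_self _).trans (Complex.abs_re_le_norm (w - x))).trans hw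
    simp at this
    linarith
  have hHd : ∀ w : ℂ, w.re < 0 → DifferentiableAt ℂ (fun w => kf x r (fun _ => 1) w * (n * St σ w / (1 - (n - 1) * w * St σ w))) w := by
    intro w hw
    have d1 := hSd w hw
    have d2 := hk w
    have d3 := hD w hw
    fun_prop (disch := assumption)
  have Z : (∮ w in C((x : ℂ), r), kf x r (fun _ => 1) w * St σ' w) = 0 := by
    have : (∮ w in C((x : ℂ), r), kf x r (fun _ => 1) w * St σ' w) =
        ∮ w in C((x : ℂ), r), kf x r (fun _ => 1) w * (n * St σ w / (1 - (n - 1) * w * St σ w)) := by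
      apply circleIntegral.integral_congr hr0.le
      intro w hw
      simp only
      by_cases him : w.im = 0
      · have : kf x r (fun _ => 1) w = 0 := by
          rw [← norm_eq_zero, kf_norm x r _ w (by simpa [dist_eq_norm] using hw), him]; simp
        rw [this]; simp
      · rw [← hrel w him, mul_div_cancel_right₀ _ (hD w (hball w (Metric.sphere_subset_closedBall hw)))]
    rw [this]
    exact Complex.circleIntegral_eq_zero_of_differentiable_on_off_countable hr0.le countable_empty
      (fun w hw => (hHd w (hball w hw)).continuousAt.continuousWithinAt)
      (fun w hw => hHd w (hball w (Metric.ball_subset_closedBall hw.1)))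
  rw [Z] at C
  have hne : -(2 * (Real.pi : ℂ) * Complex.I) ≠ 0 := by simp [Real.pi_ne_zero]
  have C2 := (mul_eq_zero.1 C.symm).resolve_left hne
  set f : ℝ → ℝ := fun s => (r ^ 2 - (s - x) ^ 2) ^ 3 with hf
  have C3 : ∫ s in Ioo (x - r) (x + r), f s ∂σ' = 0 := by
    have : ∀ s : ℝ, kf x r (fun _ => 1) s = -((f s : ℝ) : ℂ) := by
      intro s; simp only [kf, hf]; push_cast; ring
    simp_rw [this] at C2
    rw [integral_neg, integral_complex_ofReal, neg_eq_zero] at C2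
    exact_mod_cast C2
  by_contra hcon
  have fpos : ∀ s ∈ Ioo (x - r) (x + r), 0 < f s := by
    intro s hs
    apply pow_pos
    nlinarith [hs.1, hs.2]
  have hfi : IntegrableOn f (Ioo (x - r) (x + r)) σ' := by
    have : ContinuousOn f (Icc (x - r) (x + r)) := by rw [hf]; fun_prop
    exact (this.integrableOn_compact isCompact_Icc).mono_set Ioo_subset_Icc_self
  have := (setIntegral_pos_iff_support_of_nonneg_ae (μ := σ') (s := Ioo (x - r) (x + r)) (f := f)
    (by filter_upwards [ae_restrict_mem measurableSet_Ioo] with s hs using (fpos s hs).le) hfi).2 (by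
      rw [inter_eq_self_of_subset_right (show Ioo (x - r) (x + r) ⊆ Function.support f from
        fun s hs => (fpos s hs).ne')]
      exact pos_iff_ne_zero.2 hcon)
  linarith

lemma meas_div (y : ℝ) : Measurable (fun t : ℝ => y / t) := by fun_prop

lemma sg_apply (τ : Measure ℝ) (y : ℝ) (A : Set ℝ) (hA : MeasurableSet A) :
    sg τ y A = τ ((fun t => y / t) ⁻¹' A ∩ {0}ᶜ) := by
  rw [sg, Measure.map_apply (meas_div y) hA, Measure.restrict_apply (meas_div y hA)]

lemma sg_Ioo (τ : Measure ℝ) (y u : ℝ) (hy : 0 < y) (hu : 0 < u) :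
    sg τ y (Ioo 0 u) = τ (Ioi (y / u)) := by
  rw [sg_apply _ _ _ measurableSet_Ioo]
  congr 1
  ext t
  simp only [mem_inter_iff, mem_preimage, mem_Ioo, mem_compl_iff, mem_singleton_iff, mem_Ioi]
  constructor
  · rintro ⟨⟨h1, h2⟩, h3⟩
    have ht : 0 < t := by
      by_contra h
      have : y / t ≤ 0 := div_nonpos_of_nonneg_of_nonpos hy.le (not_lt.1 h)
      linarith
    rw [div_lt_iff₀ ht] at h2
    rw [div_lt_iff₀ hu]; linarith
  · intro h
    have ht : 0 < t := lt_trans (by positivity) h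
    refine ⟨⟨by positivity, ?_⟩, ht.ne'⟩
    rw [div_lt_iff₀ hu] at h
    rw [div_lt_iff₀ ht]; linarith

lemma sg_zero (τ : Measure ℝ) (y : ℝ) (hy : 0 < y) : sg τ y {0} = 0 := by
  rw [sg_apply _ _ _ (measurableSet_singleton 0)]
  convert measure_empty (μ := τ)
  ext t
  simp [hy.ne']

lemma sg_Iic (τ : Measure ℝ) (y : ℝ) (hy : 0 < y) (h : sg τ y (Iio 0) = 0) : sg τ y (Iic 0) = 0 := by
  rw [← Iio_union_right]
  exact measure_union_null h (sg_zero τ y hy)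

lemma sg_Iio (μ : Measure ℝ) (y : ℝ) (hy : 0 < y) (h : μ (Iio 0) = 0) : sg μ y (Iio 0) = 0 := by
  rw [sg_apply _ _ _ measurableSet_Iio]
  refine measure_mono_null ?_ h
  rintro t ⟨h1, h2⟩
  simp only [mem_preimage, mem_Iio] at h1 ⊢
  by_contra h
  have : 0 ≤ y / t := div_nonneg hy.le (not_lt.1 h)
  linarith

lemma sg_univ (τ : Measure ℝ) [IsProbabilityMeasure τ] (y : ℝ) : (sg τ y).real univ ≤ 1 := by
  unfold Measure.real
  rw [sg_apply _ _ _ MeasurableSet.univ]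
  exact ENNReal.toReal_mono (by simp) prob_le_one

lemma eps_lemma (μ : Measure ℝ) [IsProbabilityMeasure μ] :
    ∃ e : ℝ → ℝ, Tendsto e atTop (nhds 0) ∧ ∀ y, 0 ≤ e y ∧
      ∀ w : ℂ, ‖w‖ ≤ 1 → ‖St ((sg μ y).restrict (Ici 2)) w‖ ≤ e y := by
  set g : ℝ → ℝ := (Ici (2 : ℝ)).indicator (fun s => 2 / s) with hg
  have hgm : Measurable g := Measurable.indicator (by fun_prop) measurableSet_Ici
  have hg0 : ∀ s, 0 ≤ g s := by
    intro s
    apply indicator_nonneg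
    intro s hs
    have : (2 : ℝ) ≤ s := hs
    positivity
  have hg1 : ∀ s, ‖g s‖ ≤ 1 := by
    intro s
    rw [Real.norm_eq_abs, abs_of_nonneg (hg0 s)]
    apply indicator_le' (g := fun _ => (1 : ℝ)) _ _ s
    · intro s hs
      have : (2 : ℝ) ≤ s := hs
      rw [div_le_one (by linarith)]; exact this
    · intro s _; exact zero_le_one
  refine ⟨fun y => ∫ t, g (y / t) ∂(μ.restrict {0}ᶜ), ?_, ?_⟩
  · have := tendsto_integral_filter_of_dominated_convergence (μ := μ.restrict {0}ᶜ) (l := atTop)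
      (F := fun (y : ℝ) (t : ℝ) => g (y / t)) (f := fun _ => (0 : ℝ)) (fun _ => 1)
      (Eventually.of_forall fun y => (hgm.comp (meas_div y)).aestronglyMeasurable)
      (Eventually.of_forall fun y => ae_of_all _ fun t => hg1 _) (integrable_const _)
      (ae_of_all _ fun t => ?_)
    · simpa using this
    · have h1 : Tendsto (fun y : ℝ => |2 * t| / y) atTop (nhds 0) := tendsto_const_nhds.div_atTop tendsto_id
      refine squeeze_zero' (Eventually.of_forall fun y => hg0 _) ?_ h1
      filter_upwards [eventually_gt_atTop 0] with y hy
      have : g (y / t) ≤ |2 / (y / t)| := by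
        rw [hg]
        by_cases h : y / t ∈ Ici (2 : ℝ)
        · rw [indicator_of_mem h]; exact le_abs_self _
        · rw [indicator_of_notMem h]; exact abs_nonneg _
      refine this.trans (le_of_eq ?_)
      rw [div_div_eq_mul_div, abs_div, abs_of_pos hy]
  · intro y
    refine ⟨integral_nonneg fun t => hg0 _, fun w hw => ?_⟩
    have e1 : ∫ t, g (y / t) ∂(μ.restrict {0}ᶜ) = ∫ s, g s ∂(sg μ y) := by
      unfold sg
      rw [integral_map (meas_div y).aemeasurable hgm.aestronglyMeasurable]
    have e2 : ∫ s, g s ∂(sg μ y) = ∫ s in Ici 2, 2 / s ∂(sg μ y) := by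
      rw [hg, integral_indicator measurableSet_Ici]
    simp only
    rw [e1, e2]
    unfold St
    apply norm_integral_le_of_norm_le
    · have : Integrable g (sg μ y) := Integrable.of_bound hgm.aestronglyMeasurable 1 (ae_of_all _ hg1)
      rw [hg, integrable_indicator_iff measurableSet_Ici] at this
      exact this
    · filter_upwards [ae_restrict_mem measurableSet_Ici] with s hs
      have h3 : (2 : ℝ) ≤ s := hs
      have := norm_sub_norm_le (s : ℂ) w
      rw [Complex.norm_real, Real.norm_eq_abs, abs_of_nonneg (by linarith)] at this
      rw [norm_inv, show 2 / s = (s / 2)⁻¹ by rw [inv_div]]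
      apply inv_anti₀ (by linarith)
      linarith

lemma tail_zero (μ : Measure ℝ) [IsProbabilityMeasure μ] :
    Tendsto (fun y => μ.real (Ioi y)) atTop (nhds 0) := by
  have := tendsto_measure_iInter_atTop (μ := μ) (s := fun y : ℝ => Ioi y)
    (fun y => measurableSet_Ioi.nullMeasurableSet) (fun a b hab => Ioi_subset_Ioi hab)
    ⟨0, measure_ne_top _ _⟩
  rw [show (⋂ y : ℝ, Ioi y) = ∅ from by
    ext x; simp only [mem_iInter, mem_Ioi, mem_empty_iff_false, iff_false]
    intro h; exact lt_irrefl _ (h x), measure_empty] at this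
  have h2 := (ENNReal.tendsto_toReal ENNReal.zero_ne_top).comp this
  rw [ENNReal.toReal_zero] at h2
  exact h2

def gk (p : Polynomial ℝ) (s : ℝ) : ℝ := (s ^ 2 - 1) ^ 3 * p.eval s

lemma gk_cont (p : Polynomial ℝ) : Continuous (gk p) := by unfold gk; fun_prop

lemma gk_int (p : Polynomial ℝ) (σ : Measure ℝ) [IsFiniteMeasure σ] :
    IntegrableOn (gk p) (Ioo 0 1) σ :=
  ((gk_cont p).continuousOn.integrableOn_compact isCompact_Icc).mono_set Ioo_subset_Icc_self

lemma kf_gk (p : Polynomial ℝ) (σ : Measure ℝ) (h : σ (Iic 0) = 0) :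
    ∫ s in Ioo (-1 : ℝ) 1, kf 0 1 (fun w => Polynomial.aeval w p) (s : ℝ) ∂σ =
      ((∫ s in Ioo (0 : ℝ) 1, gk p s ∂σ : ℝ) : ℂ) := by
  have e1 : (Ioo (-1 : ℝ) 1 : Set ℝ) =ᵐ[σ] Ioo (0 : ℝ) 1 := by
    have : ∀ᵐ s ∂σ, 0 < s := by rw [ae_iff]; convert h using 2; ext; simp
    filter_upwards [this] with s hs
    apply propext
    show s ∈ Ioo (-1 : ℝ) 1 ↔ s ∈ Ioo (0 : ℝ) 1
    simp only [mem_Ioo]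
    constructor
    · intro h; exact ⟨hs, h.2⟩
    · intro h; exact ⟨by linarith, h.2⟩
  rw [setIntegral_congr_set e1, ← integral_complex_ofReal]
  congr 1
  ext s
  unfold kf gk
  have : Polynomial.aeval (s : ℂ) p = ((p.eval s : ℝ) : ℂ) := by
    have := Polynomial.aeval_algebraMap_apply ℂ s p
    simpa using this
  simp only [this]
  push_cast
  ring

lemma main_est (α : ℝ) (μ : Measure ℝ) [IsProbabilityMeasure μ]
    (hsupp : μ (Set.Iio (0 : ℝ)) = 0) (hreg : RegVarTail μ α)
    (n : ℕ) (hn : 1 ≤ n)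
    (ρ : Measure ℝ) [IsProbabilityMeasure ρ]
    (hK : ∀ z : ℂ, 0 < z.im → Ktrans ρ z = (n : ℂ) * Ktrans μ z) (p : Polynomial ℝ) (η : ℝ)
    (hη : 0 < η) :
    ∀ᶠ y in atTop, |∫ s in Ioo (0 : ℝ) 1, gk p s ∂(sg ρ y) - n * ∫ s in Ioo (0 : ℝ) 1, gk p s ∂(sg μ y)|
      ≤ η * μ.real (Ioi y) := by
  obtain ⟨e, he, he'⟩ := eps_lemma μ
  set q : ℂ → ℂ := fun w => Polynomial.aeval w p with hqd
  have hq : Differentiable ℂ q := Polynomial.differentiable_aeval p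
  obtain ⟨B, hB0, hB⟩ := kf_bounded 0 1 q hq
  have hB' : ∀ w : ℂ, ‖w‖ = 1 → ‖q w‖ ≤ B := fun w hw => hB w (by simpa using hw)
  have hT2 : Tendsto (fun y : ℝ => μ.real (Ioi (1 / 2 * y))) atTop (nhds 0) :=
    (tail_zero μ).comp (tendsto_id.const_mul_atTop (by norm_num : (0 : ℝ) < 1 / 2))
  set C : ℝ := (1 / 2 : ℝ) ^ (-α) + 1 with hC
  have hC0 : 0 < C := by positivity
  have hsm : Tendsto (fun y => 48 * B * n ^ 2 * C * (e y + μ.real (Ioi (1 / 2 * y)))) atTop (nhds 0) := by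
    have := (he.add hT2).const_mul (48 * B * n ^ 2 * C)
    simpa using this
  have hne : Tendsto (fun y => n * e y) atTop (nhds 0) := by simpa using he.const_mul (n : ℝ)
  filter_upwards [hsm.eventually_lt_const hη, hne.eventually_lt_const (by norm_num : (0 : ℝ) < 1 / 2),
    (hreg.2 (1 / 2) (by norm_num)).eventually_lt_const (by linarith : (1 / 2 : ℝ) ^ (-α) < C),
    eventually_gt_atTop 0] with y h1 h2 h3 hy
  have hTy : 0 < μ.real (Ioi y) := ENNReal.toReal_pos (hreg.1 y hy.le).ne' (measure_ne_top _ _)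
  have h3' : μ.real (Ioi (1 / 2 * y)) ≤ C * μ.real (Ioi y) := by
    exact ((div_lt_iff₀ hTy).1 h3).le
  have hrel := rel μ ρ n hK y hy
  have z1 := sg_Iic μ y hy (sg_Iio μ y hy hsupp)
  have z2 := sg_Iic ρ y hy (neg_null (sg μ y) (sg ρ y) n hn z1 hrel)
  have hδ : (sg μ y).real (Iio 2) ≤ μ.real (Ioi (1 / 2 * y)) := by
    unfold Measure.real
    apply ENNReal.toReal_mono (measure_ne_top _ _)
    calc sg μ y (Iio 2) ≤ sg μ y (Iic 0 ∪ Ioo 0 2) := by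
          apply measure_mono
          intro s hs
          rcases le_or_gt s 0 with h | h
          · exact Or.inl h
          · exact Or.inr ⟨h, hs⟩
      _ ≤ sg μ y (Iic 0) + sg μ y (Ioo 0 2) := measure_union_le _ _
      _ = μ (Ioi (1 / 2 * y)) := by
          rw [z1, zero_add, sg_Ioo μ y 2 hy two_pos]; congr 2; ring
  have E := err (sg μ y) (sg ρ y) n hn q hq B hB0 hB' (e y) _ (he' y).1 (sg_univ ρ y) hrel
    (he' y).2 h2.le hδ
  rw [kf_gk p _ z1, kf_gk p _ z2] at E
  have e3 : ((∫ s in Ioo (0 : ℝ) 1, gk p s ∂(sg ρ y) : ℝ) : ℂ) - n * ((∫ s in Ioo (0 : ℝ) 1, gk p s ∂(sg μ y) : ℝ) : ℂ)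
      = ((∫ s in Ioo (0 : ℝ) 1, gk p s ∂(sg ρ y) - n * ∫ s in Ioo (0 : ℝ) 1, gk p s ∂(sg μ y) : ℝ) : ℂ) := by
    push_cast; rfl
  rw [e3, Complex.norm_real, Real.norm_eq_abs] at E
  refine E.trans ?_
  have hey := (he' y).1
  have hT20 : 0 ≤ μ.real (Ioi (1 / 2 * y)) := measureReal_nonneg
  calc 48 * B * n ^ 2 * μ.real (Ioi (1 / 2 * y)) * (e y + μ.real (Ioi (1 / 2 * y)))
      ≤ 48 * B * n ^ 2 * (C * μ.real (Ioi y)) * (e y + μ.real (Ioi (1 / 2 * y))) := by gcongr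
    _ = (48 * B * n ^ 2 * C * (e y + μ.real (Ioi (1 / 2 * y)))) * μ.real (Ioi y) := by ring
    _ ≤ _ := by gcongr

lemma sandwich (a b η : ℝ) (ha : 0 < a) (hab : a < b) (hb : b < 1) (hη : 0 < η) :
    ∃ p : Polynomial ℝ, ∀ (σ : Measure ℝ) [IsFiniteMeasure σ],
      σ.real (Ioo 0 a) - η * σ.real (Ioo 0 1) ≤ ∫ s in Ioo (0 : ℝ) 1, gk p s ∂σ ∧
      ∫ s in Ioo (0 : ℝ) 1, gk p s ∂σ ≤ σ.real (Ioo 0 b) + η * σ.real (Ioo 0 1) := by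
  set ψ : ℝ → ℝ := fun u => max 0 (min 1 ((b - u) / (b - a))) with hψ
  set f : ℝ → ℝ := fun u => ψ u / ((min u b) ^ 2 - 1) ^ 3 with hf
  have hden : ∀ u ∈ Icc (0 : ℝ) 1, ((min u b) ^ 2 - 1) ^ 3 ≠ 0 := by
    intro u hu
    have h1 : min u b ≤ b := min_le_right _ _
    have h2 : 0 ≤ min u b := le_min hu.1 (by linarith)
    apply pow_ne_zero
    nlinarith
  have hfc : ContinuousOn f (Icc 0 1) := by
    apply ContinuousOn.div _ _ hden
    · apply Continuous.continuousOn; rw [hψ]; fun_prop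
    · apply Continuous.continuousOn; fun_prop
  obtain ⟨p, hp⟩ := exists_polynomial_near_of_continuousOn 0 1 f hfc η hη
  have hclose : ∀ u ∈ Ioo (0 : ℝ) 1, |gk p u - ψ u| ≤ η := by
    intro u hu
    have hu' := Ioo_subset_Icc_self hu
    have e1 : ψ u = (u ^ 2 - 1) ^ 3 * f u := by
      rcases le_or_gt u b with h | h
      · have := hden u hu'
        rw [min_eq_left h] at this
        simp only [hf]
        rw [min_eq_left h]
        rw [mul_div_cancel₀ _ this]
      · have : ψ u = 0 := by
          simp only [hψ]
          apply max_eq_left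
          apply (min_le_right _ _).trans
          apply div_nonpos_of_nonpos_of_nonneg <;> linarith
        simp only [hf]
        rw [this]; simp
    rw [e1]
    unfold gk
    rw [← mul_sub, abs_mul]
    have h2 : |(u ^ 2 - 1) ^ 3| ≤ 1 := by
      rw [abs_pow]
      apply pow_le_one₀ (abs_nonneg _)
      rw [abs_le]
      constructor <;> nlinarith [hu.1, hu.2]
    calc _ ≤ 1 * η := mul_le_mul h2 (hp u hu').le (abs_nonneg _) zero_le_one
      _ = η := one_mul _
  refine ⟨p, fun σ _ => ?_⟩
  have ind : ∀ c : ℝ, c < 1 → ∫ s in Ioo (0 : ℝ) 1, (Ioo (0 : ℝ) c).indicator (fun _ => (1 : ℝ)) s ∂σ = σ.real (Ioo 0 c) := by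
    intro c hc
    rw [integral_indicator measurableSet_Ioo, Measure.restrict_restrict measurableSet_Ioo,
      inter_eq_self_of_subset_left (Ioo_subset_Ioo_right hc.le)]
    simp
  have indi : ∀ c : ℝ, IntegrableOn ((Ioo (0 : ℝ) c).indicator (fun _ => (1 : ℝ))) (Ioo 0 1) σ :=
    fun c => (integrable_const _).indicator measurableSet_Ioo
  have cst : ∫ s in Ioo (0 : ℝ) 1, η ∂σ = η * σ.real (Ioo 0 1) := by simp [mul_comm]
  have csti : IntegrableOn (fun _ : ℝ => η) (Ioo 0 1) σ := integrable_const _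
  constructor
  · rw [← ind a (by linarith), ← cst, ← integral_sub (indi a) csti]
    apply setIntegral_mono_on ((indi a).sub csti) (gk_int p σ) measurableSet_Ioo
    intro u hu
    have h1 := (abs_le.1 (hclose u hu)).1
    have h2 : (Ioo (0 : ℝ) a).indicator (fun _ => (1 : ℝ)) u ≤ ψ u := by
      by_cases h : u ∈ Ioo 0 a
      · rw [indicator_of_mem h]
        apply le_max_of_le_right
        apply le_min le_rfl
        rw [le_div_iff₀ (by linarith)]; linarith [h.2]
      · rw [indicator_of_notMem h]; exact le_max_left _ _
    simp only [Pi.sub_apply]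
    linarith
  · rw [← ind b hb, ← cst, ← integral_add (indi b) csti]
    apply setIntegral_mono_on (gk_int p σ) ((indi b).add csti) measurableSet_Ioo
    intro u hu
    have h1 := (abs_le.1 (hclose u hu)).2
    have h2 : ψ u ≤ (Ioo (0 : ℝ) b).indicator (fun _ => (1 : ℝ)) u := by
      by_cases h : u ∈ Ioo 0 b
      · rw [indicator_of_mem h]
        exact max_le zero_le_one (min_le_left _ _)
      · rw [indicator_of_notMem h]
        apply max_le le_rfl
        apply (min_le_right _ _).trans
        have : b ≤ u := by
          by_contra hh; exact h ⟨hu.1, not_le.1 hh⟩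
        apply div_nonpos_of_nonpos_of_nonneg <;> linarith
    simp only [Pi.add_apply]
    linarith

lemma crude (σ : Measure ℝ) [IsFiniteMeasure σ] :
    27 / 64 * σ.real (Ioo 0 (1 / 2)) ≤ ∫ s in Ioo (0 : ℝ) 1, gk (-1) s ∂σ ∧
      ∫ s in Ioo (0 : ℝ) 1, gk (-1) s ∂σ ≤ σ.real (Ioo 0 1) := by
  have hg : ∀ s, gk (-1) s = (1 - s ^ 2) ^ 3 := by intro s; simp [gk]; ring
  constructor
  · have e1 : 27 / 64 * σ.real (Ioo 0 (1 / 2)) = ∫ s in Ioo (0 : ℝ) 1, (Ioo (0 : ℝ) (1 / 2)).indicator (fun _ => (27 / 64 : ℝ)) s ∂σ := by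
      rw [integral_indicator measurableSet_Ioo, Measure.restrict_restrict measurableSet_Ioo,
        inter_eq_self_of_subset_left (Ioo_subset_Ioo_right (by norm_num))]
      simp [mul_comm]
    rw [e1]
    have i1 : IntegrableOn ((Ioo (0 : ℝ) (1 / 2)).indicator (fun _ => (27 / 64 : ℝ))) (Ioo 0 1) σ :=
      (integrable_const _).indicator measurableSet_Ioo
    apply setIntegral_mono_on i1 (gk_int _ σ) measurableSet_Ioo
    intro u hu
    rw [hg]
    by_cases h : u ∈ Ioo (0 : ℝ) (1 / 2)
    · rw [indicator_of_mem h]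
      have : (3 / 4 : ℝ) ≤ 1 - u ^ 2 := by nlinarith [h.1, h.2]
      calc (27 / 64 : ℝ) = (3 / 4) ^ 3 := by norm_num
        _ ≤ _ := by gcongr
    · rw [indicator_of_notMem h]
      apply pow_nonneg
      nlinarith [hu.1, hu.2]
  · have e1 : σ.real (Ioo 0 1) = ∫ s in Ioo (0 : ℝ) 1, (1 : ℝ) ∂σ := by simp
    rw [e1]
    apply setIntegral_mono_on (gk_int _ σ) (integrable_const _) measurableSet_Ioo
    intro u hu
    rw [hg]
    apply pow_le_one₀ <;> nlinarith [hu.1, hu.2]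

lemma two_sided (α : ℝ) (μ : Measure ℝ) [IsProbabilityMeasure μ]
    (hsupp : μ (Set.Iio (0 : ℝ)) = 0) (hreg : RegVarTail μ α)
    (n : ℕ) (hn : 1 ≤ n)
    (ρ : Measure ℝ) [IsProbabilityMeasure ρ]
    (hK : ∀ z : ℂ, 0 < z.im → Ktrans ρ z = (n : ℂ) * Ktrans μ z) (a b η : ℝ)
    (ha : 0 < a) (hab : a < b) (hb : b < 1) (hη : 0 < η) :
    ∀ᶠ y in atTop, ρ.real (Ioi (y / a)) ≤ n * μ.real (Ioi (y / b)) + η * μ.real (Ioi y) ∧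
      n * μ.real (Ioi (y / a)) ≤ ρ.real (Ioi (y / b)) + η * μ.real (Ioi y) := by
  have conv : ∀ (τ : Measure ℝ) (y u : ℝ), 0 < y → 0 < u → (sg τ y).real (Ioo 0 u) = τ.real (Ioi (y / u)) := by
    intro τ y u hy hu
    unfold Measure.real
    rw [sg_Ioo τ y u hy hu]
  have hn0 : (0 : ℝ) ≤ n := by positivity
  -- crude bound
  set C : ℝ := (1 / 2 : ℝ) ^ (-α) + 1 with hC
  have hC0 : 0 < C := by positivity
  set M : ℝ := 64 / 27 * (n + 1) * C with hM
  have hM0 : 0 < M := by positivity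
  have hcr : ∀ᶠ y in atTop, ρ.real (Ioi y) ≤ M * μ.real (Ioi y) := by
    have h1 := (tendsto_id.const_mul_atTop (by norm_num : (0 : ℝ) < 1 / 2)).eventually
      (main_est α μ hsupp hreg n hn ρ hK (-1) 1 one_pos)
    filter_upwards [h1, (hreg.2 (1 / 2) (by norm_num)).eventually_lt_const (by linarith : (1 / 2 : ℝ) ^ (-α) < C),
      eventually_gt_atTop 0] with y h1 h3 hy
    simp only [id] at h1
    have hTy : 0 < μ.real (Ioi y) := ENNReal.toReal_pos (hreg.1 y hy.le).ne' (measure_ne_top _ _)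
    have h3' : μ.real (Ioi (1 / 2 * y)) ≤ C * μ.real (Ioi y) := by
      exact ((div_lt_iff₀ hTy).1 h3).le
    have hy2 : 0 < 1 / 2 * y := by positivity
    have c1 := (crude (sg ρ (1 / 2 * y))).1
    have c2 := (crude (sg μ (1 / 2 * y))).2
    rw [conv _ _ _ hy2 (by norm_num), show 1 / 2 * y / (1 / 2) = y by ring] at c1
    rw [conv _ _ _ hy2 (by norm_num), div_one] at c2
    have h4 := (abs_le.1 h1).2
    have h5 := mul_le_mul_of_nonneg_left c2 hn0
    have h6 : 27 / 64 * ρ.real (Ioi y) ≤ (n + 1) * μ.real (Ioi (1 / 2 * y)) := by linarith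
    have h7 : (n + 1) * μ.real (Ioi (1 / 2 * y)) ≤ (n + 1) * (C * μ.real (Ioi y)) := by gcongr
    rw [hM]
    linarith
  set η' : ℝ := η / (2 * (M + n)) with hη'
  have hη0 : 0 < η' := by positivity
  obtain ⟨p, hp⟩ := sandwich a b η' ha hab hb hη0
  filter_upwards [hcr, main_est α μ hsupp hreg n hn ρ hK p (η / 2) (by positivity),
    eventually_gt_atTop 0] with y h1 h2 hy
  have s1 := hp (sg ρ y)
  have s2 := hp (sg μ y)
  rw [conv _ _ _ hy ha, conv _ _ b hy (by linarith), conv _ _ _ hy one_pos, div_one] at s1 s2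
  obtain ⟨h3, h4⟩ := abs_le.1 h2
  have k1 := mul_le_mul_of_nonneg_left s2.1 hn0
  have k2 := mul_le_mul_of_nonneg_left s2.2 hn0
  have k3 : η' * ρ.real (Ioi y) + n * (η' * μ.real (Ioi y)) ≤ η / 2 * μ.real (Ioi y) := by
    calc _ ≤ η' * (M * μ.real (Ioi y)) + n * (η' * μ.real (Ioi y)) := by gcongr
      _ = η' * (M + n) * μ.real (Ioi y) := by ring
      _ = η / 2 * μ.real (Ioi y) := by rw [hη']; field_simp
  constructor
  · linarith [s1.1]
  · linarith [s1.2]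

lemma final (α : ℝ) (T R : ℝ → ℝ) (N : ℝ) (hN : 0 < N) (hT : ∀ x, 0 ≤ x → 0 < T x)
    (hreg : ∀ t : ℝ, 0 < t → Tendsto (fun x => T (t * x) / T x) atTop (nhds (t ^ (-α))))
    (h : ∀ a b η : ℝ, 0 < a → a < b → b < 1 → 0 < η →
      ∀ᶠ y in atTop, R (y / a) ≤ N * T (y / b) + η * T y ∧ N * T (y / a) ≤ R (y / b) + η * T y) :
    Tendsto (fun y => R y / (N * T y)) atTop (nhds 1) := by
  have hcont : ContinuousAt (fun t : ℝ => t ^ (-α)) 1 :=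
    Real.continuousAt_rpow_const 1 (-α) (Or.inl one_ne_zero)
  rw [tendsto_order]
  constructor
  · intro c hc
    -- lower bound
    obtain ⟨d, hd1, hd2⟩ := exists_between hc
    have e1 : ∀ᶠ t in nhds (1 : ℝ), d < t ^ (-α) := by
      apply hcont.eventually_const_lt; simpa using hd2
    obtain ⟨l, hl1, hl2⟩ := ((e1.filter_mono nhdsWithin_le_nhds).and
      (self_mem_nhdsWithin : Ioi (1 : ℝ) ∈ nhdsWithin 1 (Ioi 1))).exists
    have hl2 : 1 < l := hl2
    have hl0 : 0 < l := by linarith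
    -- b = 1/2, a = 1/(2l)
    set P : ℝ := (1 / 2 : ℝ) ^ (-α) + 1 with hP
    have hP0 : 0 < P := by positivity
    set η := N * (d - c) / P with hη
    have hη0 : 0 < η := by have : 0 < d - c := by linarith
                           positivity
    have H := (tendsto_id.const_mul_atTop (by norm_num : (0 : ℝ) < 1 / 2)).eventually
      (h (1 / (2 * l)) (1 / 2) η (by positivity)
        (by apply one_div_lt_one_div_of_lt <;> linarith) (by norm_num) hη0)
    filter_upwards [H, (hreg l hl0).eventually_const_lt hl1,
      (hreg (1 / 2) (by norm_num)).eventually_lt_const (by linarith : (1 / 2 : ℝ) ^ (-α) < P),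
      eventually_ge_atTop 0] with x h1 h2 h3 hx
    have hTx := hT x hx
    simp only [id] at h1
    rw [show 1 / 2 * x / (1 / (2 * l)) = l * x by field_simp, show 1 / 2 * x / (1 / 2) = x by ring] at h1
    rw [lt_div_iff₀ hTx] at h2
    rw [div_lt_iff₀ hTx] at h3
    rw [lt_div_iff₀ (by positivity)]
    have k1 := mul_lt_mul_of_pos_left h2 hN
    have k2 := mul_lt_mul_of_pos_left h3 hη0
    have k3 : η * (P * T x) = N * (d - c) * T x := by rw [hη]; field_simp
    nlinarith [h1.2]
  · intro c hc
    obtain ⟨d, hd1, hd2⟩ := exists_between hc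
    have e1 : ∀ᶠ t in nhds (1 : ℝ), t ^ (-α) < d := by
      apply hcont.eventually_lt_const; simpa using hd1
    obtain ⟨l, ⟨hl1, hl3⟩, hl2⟩ := (((e1.and (eventually_gt_nhds zero_lt_one)).filter_mono nhdsWithin_le_nhds).and
      (self_mem_nhdsWithin : Iio (1 : ℝ) ∈ nhdsWithin 1 (Iio 1))).exists
    have hl2 : l < 1 := hl2
    -- b = 1/2, a = l/2
    have hl0 : 0 < l / 2 := by positivity
    set P : ℝ := (l / 2 : ℝ) ^ (-α) + 1 with hP
    have hP0 : 0 < P := by positivity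
    set η := N * (c - d) / P with hη
    have hη0 : 0 < η := by have : 0 < c - d := by linarith
                           positivity
    have H := (tendsto_id.const_mul_atTop hl0).eventually
      (h (l / 2) (1 / 2) η hl0 (by linarith) (by norm_num) hη0)
    filter_upwards [H, (hreg l hl3).eventually_lt_const hl1,
      (hreg (l / 2) hl0).eventually_lt_const (by linarith : (l / 2 : ℝ) ^ (-α) < P),
      eventually_ge_atTop 0] with x h1 h2 h3 hx
    have hTx := hT x hx
    simp only [id] at h1
    rw [show l / 2 * x / (l / 2) = x by field_simp, show l / 2 * x / (1 / 2) = l * x by ring] at h1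
    rw [div_lt_iff₀ hTx] at h2
    rw [div_lt_iff₀ hTx] at h3
    rw [div_lt_iff₀ (by positivity)]
    have k1 := mul_lt_mul_of_pos_left h2 hN
    have k2 := mul_lt_mul_of_pos_left h3 hη0
    have k3 : η * (P * T x) = N * (c - d) * T x := by rw [hη]; field_simp
    nlinarith [h1.1]

/-- Boolean subexponentiality of regularly varying measures. -/
theorem boolean_subexponential
    (α : ℝ) (hα : 0 ≤ α) (μ : Measure ℝ) [IsProbabilityMeasure μ]
    (hsupp : μ (Set.Iio (0 : ℝ)) = 0) (hreg : RegVarTail μ α)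
    (n : ℕ) (hn : 1 ≤ n)
    (ρ : Measure ℝ) [IsProbabilityMeasure ρ]
    (hK : ∀ z : ℂ, 0 < z.im → Ktrans ρ z = (n : ℂ) * Ktrans μ z) :
    Filter.Tendsto
      (fun y : ℝ => (ρ (Set.Ioi y)).toReal / ((n : ℝ) * (μ (Set.Ioi y)).toReal))
      Filter.atTop (nhds 1) := by
  have hn0 : (0 : ℝ) < n := by exact_mod_cast hn
  exact final α (fun y => μ.real (Ioi y)) (fun y => ρ.real (Ioi y)) n hn0
    (fun x hx => ENNReal.toReal_pos (hreg.1 x hx).ne' (measure_ne_top _ _)) hreg.2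
    (fun a b η ha hab hb hη => two_sided α μ hsupp hreg n hn ρ hK a b η ha hab hb hη)
end
end

section
/- Let α ≥ 0 and c > 0. Let μ and ν be probability measures on [0,∞), both with regularly varying tails of index −α, such that ν(y,∞)/(c·μ(y,∞)) → 1 as y → ∞. If ρ is a probability measure on ℝ with K_ρ(z) = K_μ(z) + K_ν(z) for all z ∈ ℂ⁺ (so ρ = μ ⊎ ν, the additive Boolean convolution), then ρ(y,∞)/((1+c)·μ(y,∞)) → 1 as y → ∞. -/
open MeasureTheory Filter Set Complex

noncomputable section

open Asymptotics

open MeasureTheory Filter Set Complex Asymptotics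
noncomputable section

theorem bt_doubling {P : ℝ → Prop} {x0 : ℝ} (h0 : 0 < x0)
    (hb : ∀ y, x0 ≤ y → y ≤ 2 * x0 → P y) (hs : ∀ y, x0 ≤ y → P y → P (2 * y)) :
    ∀ y, x0 ≤ y → P y := by
  have key : ∀ n : ℕ, ∀ y, x0 ≤ y → y ≤ 2 ^ n * x0 → P y := by
    intro n
    induction n with
    | zero => intro y h1 h2; exact hb y h1 (by simp at h2; linarith)
    | succ n ih =>
      intro y h1 h2
      by_cases h : y ≤ 2 * x0
      · exact hb y h1 h
      · push Not at h
        have := hs (y / 2) (by linarith) (ih (y / 2) (by linarith) (by rw [pow_succ] at h2; linarith))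
        rwa [mul_div_cancel₀ y two_ne_zero] at this
  intro y hy
  obtain ⟨n, hn⟩ := pow_unbounded_of_one_lt (y / x0) (one_lt_two)
  exact key n y hy ((div_le_iff₀ h0).1 hn.le)

/-- basic regular variation data for a tail function -/
structure BTail (T : ℝ → ℝ) (α : ℝ) : Prop where
  anti : Antitone T
  pos : ∀ x, 0 < T x
  le_one : ∀ x, T x ≤ 1
  rv : ∀ t : ℝ, 0 < t → Tendsto (fun x => T (t * x) / T x) atTop (nhds (t ^ (-α)))

theorem RegVarTail.bt {μ : Measure ℝ} [IsProbabilityMeasure μ] {α : ℝ} (h : RegVarTail μ α) :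
    BTail (fun x => (μ (Ioi x)).toReal) α where
  anti := fun x y hxy => ENNReal.toReal_mono (measure_ne_top _ _) (measure_mono (Ioi_subset_Ioi hxy))
  pos := fun x => ENNReal.toReal_pos
    ((h.1 (max x 0) (le_max_right _ _)).trans_le
      (measure_mono (Ioi_subset_Ioi (le_max_left _ _)))).ne' (measure_ne_top _ _)
  le_one := fun x => ENNReal.toReal_mono ENNReal.one_ne_top prob_le_one
  rv := h.2

theorem BTail.step_lower {T α} (h : BTail T α) {γ : ℝ} (hγ : α < γ) :
    ∃ x0 : ℝ, 1 ≤ x0 ∧ ∀ y, x0 ≤ y → (2:ℝ) ^ (-γ) * T y ≤ T (2 * y) := by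
  have := (h.rv 2 two_pos).eventually_const_le
    (show (2:ℝ) ^ (-γ) < 2 ^ (-α) from Real.rpow_lt_rpow_of_exponent_lt one_lt_two (by linarith))
  obtain ⟨x0, hx0⟩ := (this.and (eventually_ge_atTop 1)).exists_forall_of_atTop
  refine ⟨x0, (hx0 x0 le_rfl).2, fun y hy => ?_⟩
  exact (le_div_iff₀ (h.pos y)).1 (hx0 y hy).1

theorem BTail.step_upper {T α} (h : BTail T α) {γ : ℝ} (hγ : γ < α) :
    ∃ x0 : ℝ, 1 ≤ x0 ∧ ∀ y, x0 ≤ y → T (2 * y) ≤ (2:ℝ) ^ (-γ) * T y := by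
  have := (h.rv 2 two_pos).eventually_le_const
    (show (2:ℝ) ^ (-α) < 2 ^ (-γ) from Real.rpow_lt_rpow_of_exponent_lt one_lt_two (by linarith))
  obtain ⟨x0, hx0⟩ := (this.and (eventually_ge_atTop 1)).exists_forall_of_atTop
  refine ⟨x0, (hx0 x0 le_rfl).2, fun y hy => ?_⟩
  exact (div_le_iff₀ (h.pos y)).1 (hx0 y hy).1

theorem BTail.lower {T α} (h : BTail T α) {γ : ℝ} (hγ : α < γ) (hγ0 : 0 < γ) :
    ∃ C x0 : ℝ, 1 ≤ x0 ∧ ∀ y, x0 ≤ y → y ^ (-γ) ≤ C * T y := by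
  obtain ⟨x0, h1, hx0⟩ := h.step_lower hγ
  refine ⟨1 / T (2 * x0), x0, h1, bt_doubling (by linarith) ?_ ?_⟩
  · intro y hy1 hy2
    have : y ^ (-γ) ≤ 1 := Real.rpow_le_one_of_one_le_of_nonpos (by linarith) (by linarith)
    refine this.trans ?_
    rw [one_div, ← div_eq_inv_mul, le_div_iff₀ (h.pos _), one_mul]
    exact h.anti hy2
  · intro y hy hP
    rw [Real.mul_rpow (by norm_num) (by linarith)]
    have h2 : (0:ℝ) < 2 ^ (-γ) := by positivity
    calc (2:ℝ) ^ (-γ) * y ^ (-γ) ≤ 2 ^ (-γ) * (1 / T (2 * x0) * T y) := by gcongr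
      _ = 1 / T (2 * x0) * (2 ^ (-γ) * T y) := by ring
      _ ≤ _ := by
        have := h.pos (2 * x0)
        gcongr
        exact hx0 y hy

theorem BTail.upper {T α} (h : BTail T α) {γ : ℝ} (hγ : γ < α) (hγ0 : 0 < γ) :
    ∃ C x0 : ℝ, 1 ≤ x0 ∧ 0 ≤ C ∧ ∀ y, x0 ≤ y → T y ≤ C * y ^ (-γ) := by
  obtain ⟨x0, h1, hx0⟩ := h.step_upper hγ
  refine ⟨(2 * x0) ^ γ, x0, h1, by positivity, bt_doubling (by linarith) ?_ ?_⟩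
  · intro y hy1 hy2
    refine (h.le_one y).trans ?_
    rw [Real.rpow_neg (by linarith), ← div_eq_mul_inv, le_div_iff₀ (Real.rpow_pos_of_pos (by linarith) _), one_mul]
    exact Real.rpow_le_rpow (by linarith) hy2 hγ0.le
  · intro y hy hP
    rw [Real.mul_rpow (x := 2) (y := y) (z := -γ) (by norm_num) (by linarith)]
    have h2 : (0:ℝ) < 2 ^ (-γ) := by positivity
    calc T (2 * y) ≤ 2 ^ (-γ) * T y := hx0 y hy
      _ ≤ 2 ^ (-γ) * ((2 * x0) ^ γ * y ^ (-γ)) := by gcongr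
      _ = _ := by ring

theorem bt_rpow_o {a b : ℝ} (h : a < b) :
    (fun y : ℝ => y ^ (-b)) =o[atTop] (fun y : ℝ => y ^ (-a)) := by
  refine isLittleO_of_tendsto' ?_ ?_
  · filter_upwards [eventually_gt_atTop 0] with y hy h0
    exact absurd h0 (Real.rpow_pos_of_pos hy _).ne'
  · refine (tendsto_rpow_neg_atTop (sub_pos.2 h)).congr' ?_
    filter_upwards [eventually_gt_atTop 0] with y hy
    rw [← Real.rpow_sub hy]; congr 1; ring

theorem BTail.isLittleO {T α} (h : BTail T α) (hα : 0 ≤ α) {γ : ℝ} (hγ : α < γ) :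
    (fun y : ℝ => y ^ (-γ)) =o[atTop] T := by
  obtain ⟨C, x0, h1, hx⟩ := h.lower (γ := (α + γ) / 2) (by linarith) (by linarith)
  have hO : (fun y : ℝ => y ^ (-((α + γ) / 2))) =O[atTop] T := by
    refine Asymptotics.IsBigO.of_bound C ?_
    filter_upwards [eventually_ge_atTop x0] with y hy
    rw [Real.norm_of_nonneg (Real.rpow_nonneg (by linarith) _), Real.norm_of_nonneg (h.pos y).le]
    exact hx y hy
  exact (bt_rpow_o (by linarith)).trans_isBigO hO

end

open MeasureTheory Filter Set Complex Asymptotics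
noncomputable section

theorem bt_ae_nonneg {μ : Measure ℝ} (h : μ (Iio (0:ℝ)) = 0) : ∀ᵐ t ∂μ, 0 ≤ t := by
  rw [ae_iff]; simpa [not_le, Iio] using h

theorem bt_min_int' {μ : Measure ℝ} [IsProbabilityMeasure μ] {y : ℝ} (hy : 0 < y) (N : ℕ) :
    Integrable (fun t : ℝ => min 1 ((|t| / y) ^ N)) μ := by
  refine Integrable.of_bound (C := 1) (by fun_prop) (Eventually.of_forall fun t => ?_)
  have : 0 ≤ (|t| / y) ^ N := by positivity
  rw [Real.norm_of_nonneg (le_min zero_le_one this)]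
  exact min_le_left _ _

theorem bt_J {μ : Measure ℝ} [IsProbabilityMeasure μ] {α : ℝ} (hs : μ (Iio (0:ℝ)) = 0)
    (h : BTail (fun x => (μ (Ioi x)).toReal) α) {N : ℕ} (hN : α < N) :
    ∃ C x0 : ℝ, 1 ≤ x0 ∧ 0 ≤ C ∧
      ∀ y, x0 ≤ y → ∫ t, min 1 ((|t| / y) ^ N) ∂μ ≤ C * (μ (Ioi y)).toReal := by
  set T := (fun x => (μ (Ioi x)).toReal) with hT
  set γ := (α + N) / 2 with hγ
  have hγ1 : α < γ := by rw [hγ]; linarith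
  have hγ2 : γ < N := by rw [hγ]; linarith
  obtain ⟨x0, h1, hx0⟩ := h.step_lower hγ1
  have hstep : ∀ y, x0 ≤ y → ∫ t, min 1 ((|t| / (2 * y)) ^ N) ∂μ ≤
      (2:ℝ)⁻¹ ^ N * ∫ t, min 1 ((|t| / y) ^ N) ∂μ + T y := by
    intro y hy
    have hy0 : 0 < y := by linarith
    have e : T y = ∫ t, (Ioi y).indicator (fun _ => (1:ℝ)) t ∂μ := by
      rw [integral_indicator measurableSet_Ioi]; simp [hT, Measure.real]
    rw [e, ← integral_const_mul, ← integral_add ((bt_min_int' hy0 N).const_mul _)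
      ((integrable_const _).indicator measurableSet_Ioi)]
    refine integral_mono_ae (bt_min_int' (by linarith) N)
      (((bt_min_int' hy0 N).const_mul _).add ((integrable_const _).indicator measurableSet_Ioi)) ?_
    filter_upwards [bt_ae_nonneg hs] with t ht
    by_cases hty : t ≤ y
    · have : (|t| / y) ^ N ≤ 1 := by
        rw [abs_of_nonneg ht]
        exact pow_le_one₀ (by positivity) ((div_le_one hy0).2 hty)
      have hn : t ∉ Ioi y := by simpa using hty
      rw [min_eq_right this, indicator_of_notMem hn, add_zero, ← mul_pow]
      refine (min_le_right _ _).trans (le_of_eq ?_)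
      congr 1; field_simp
    · have hn : t ∈ Ioi y := by simpa using hty
      rw [indicator_of_mem hn]
      refine (min_le_left _ _).trans ?_
      have : 0 ≤ (2:ℝ)⁻¹ ^ N * min 1 ((|t| / y) ^ N) := by positivity
      linarith
  set r : ℝ := 2⁻¹ ^ N * 2 ^ γ with hr
  have hr1 : r < 1 := by
    rw [hr, inv_pow, ← Real.rpow_natCast, inv_mul_lt_iff₀ (by positivity), mul_one]
    exact Real.rpow_lt_rpow_of_exponent_lt one_lt_two hγ2
  set C := max (1 / T (2 * x0)) (2 ^ γ / (1 - r)) with hC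
  have hCpos : 0 ≤ C := le_trans (by have := h.pos (2 * x0); positivity) (le_max_left _ _)
  refine ⟨C, x0, h1, hCpos, bt_doubling (by linarith) ?_ ?_⟩
  · intro y hy1 hy2
    have hy0 : 0 < y := by linarith
    have : ∫ t, min 1 ((|t| / y) ^ N) ∂μ ≤ 1 := by
      calc _ ≤ ∫ t, (1:ℝ) ∂μ := integral_mono (bt_min_int' hy0 N) (integrable_const _)
            (fun t => min_le_left _ _)
        _ = 1 := by simp
    refine this.trans ?_
    calc (1:ℝ) = 1 / T (2 * x0) * T (2 * x0) := by
          have := (h.pos (2 * x0)).ne'; field_simp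
      _ ≤ C * T y := mul_le_mul (le_max_left _ _) (h.anti hy2) (h.pos _).le hCpos
  · intro y hy hP
    refine (hstep y hy).trans ?_
    have h3 : C * (1 - r) ≥ 2 ^ γ := by
      have : 2 ^ γ / (1 - r) ≤ C := le_max_right _ _
      exact (div_le_iff₀ (by linarith)).1 this
    have h4 : T y ≤ 2 ^ γ * T (2 * y) := by
      have := hx0 y hy
      rw [Real.rpow_neg (by norm_num), inv_mul_le_iff₀ (by positivity)] at this
      exact this
    calc (2:ℝ)⁻¹ ^ N * ∫ t, min 1 ((|t| / y) ^ N) ∂μ + T y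
        ≤ (2:ℝ)⁻¹ ^ N * (C * T y) + T y := by gcongr
      _ = ((2:ℝ)⁻¹ ^ N * C + 1) * T y := by ring
      _ ≤ ((2:ℝ)⁻¹ ^ N * C + 1) * (2 ^ γ * T (2 * y)) := by gcongr
      _ = (C * r + 2 ^ γ) * T (2 * y) := by rw [hr]; ring
      _ ≤ C * T (2 * y) := by
        have := h.pos (2 * y)
        gcongr
        linarith

theorem bt_moment {μ : Measure ℝ} [IsProbabilityMeasure μ] {α : ℝ} (hs : μ (Iio (0:ℝ)) = 0)
    (h : BTail (fun x => (μ (Ioi x)).toReal) α) {β : ℝ} (hβ0 : 0 < β) (hβ : β < α) :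
    Integrable (fun t : ℝ => |t| ^ β) μ := by
  obtain ⟨C, x0, h1, hC, hx⟩ := h.upper (γ := (β + α) / 2) (by linarith) (by linarith)
  have hm : Measurable (fun t : ℝ => |t| ^ β) := by fun_prop
  refine ⟨hm.aestronglyMeasurable, ?_⟩
  rw [hasFiniteIntegral_iff_ofReal (Eventually.of_forall fun t => by positivity)]
  rw [lintegral_rpow_eq_lintegral_meas_lt_mul μ (Eventually.of_forall fun t => abs_nonneg t)
    (by fun_prop) hβ0]
  refine ENNReal.mul_lt_top ENNReal.ofReal_lt_top ?_
  have e : Ioi (0:ℝ) = Ioc 0 x0 ∪ Ioi x0 := (Ioc_union_Ioi_eq_Ioi (by linarith)).symm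
  rw [e]
  refine (lintegral_union_le _ _ _).trans_lt (ENNReal.add_lt_top.2 ⟨?_, ?_⟩)
  · have hi : IntegrableOn (fun t : ℝ => t ^ (β - 1)) (Ioc 0 x0) := by
      have := intervalIntegral.intervalIntegrable_rpow' (a := 0) (b := x0) (r := β - 1) (by linarith)
      rwa [intervalIntegrable_iff, uIoc_of_le (by linarith)] at this
    refine lt_of_le_of_lt ?_ hi.lintegral_lt_top
    refine lintegral_mono fun t => ?_
    exact (mul_le_mul_left prob_le_one _).trans (by rw [one_mul])
  · have hi : IntegrableOn (fun t : ℝ => C * t ^ (β - 1 - (β + α) / 2)) (Ioi x0) :=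
      (integrableOn_Ioi_rpow_of_lt (by linarith) (by linarith)).const_mul C
    refine lt_of_le_of_lt ?_ hi.lintegral_lt_top
    refine setLIntegral_mono' measurableSet_Ioi fun t ht => ?_
    have ht' : x0 < t := ht
    have e2 : μ {a | t < |a|} = ENNReal.ofReal ((μ (Ioi t)).toReal) := by
      rw [ENNReal.ofReal_toReal (measure_ne_top _ _)]
      refine measure_congr ?_
      filter_upwards [bt_ae_nonneg hs] with a ha
      have : (t < |a|) = (t < a) := by rw [abs_of_nonneg ha]
      exact this
    rw [e2, ← ENNReal.ofReal_mul ENNReal.toReal_nonneg]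
    refine ENNReal.ofReal_le_ofReal ?_
    calc _ ≤ C * t ^ (-((β + α) / 2)) * t ^ (β - 1) := by
          have : 0 ≤ t ^ (β - 1) := Real.rpow_nonneg (by linarith) _
          gcongr; exact hx t ht'.le
      _ = _ := by rw [mul_assoc, ← Real.rpow_add (by linarith)]; congr 2; ring
end

open MeasureTheory Filter Set Complex Asymptotics
noncomputable section

def bk (w : ℂ) (s : ℝ) : ℂ := s / (w - s)
def bpsi (τ : Measure ℝ) (z : ℂ) : ℂ := ∫ t, bk z t ∂τ

theorem bk_ne {w : ℂ} (hw : w.im ≠ 0) (s : ℝ) : w - s ≠ 0 := by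
  intro h
  apply hw
  have := congrArg Complex.im h
  simpa using this

theorem bk_cont {w : ℂ} (hw : w.im ≠ 0) : Continuous (bk w) := by
  unfold bk
  exact Continuous.div (by fun_prop) (by fun_prop) (bk_ne hw)

theorem bk_bound {w : ℂ} (hw : w.im ≠ 0) :
    ∃ C : ℝ, 0 ≤ C ∧ ∀ s : ℝ, ‖bk w s‖ ≤ C * min 1 |s| := by
  have hi : 0 < |w.im| := abs_pos.2 hw
  refine ⟨|w.im|⁻¹ + (1 + ‖w‖ / |w.im|), by positivity, fun s => ?_⟩
  have h1 : |w.im| ≤ ‖w - s‖ := by simpa using Complex.abs_im_le_norm (w - s)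
  have h0 : 0 < ‖w - s‖ := hi.trans_le h1
  have e : ‖bk w s‖ = |s| / ‖w - s‖ := by simp [bk]
  have hs : |s| ≤ (1 + ‖w‖ / |w.im|) * ‖w - s‖ := by
    have a1 : |s| ≤ ‖w - s‖ + ‖w‖ := by
      have : (s:ℂ) = w - (w - s) := by ring
      calc |s| = ‖(s:ℂ)‖ := by simp
        _ = ‖w - (w - s)‖ := by rw [← this]
        _ ≤ _ := by rw [add_comm]; exact norm_sub_le _ _
    have a2 : ‖w‖ ≤ ‖w‖ / |w.im| * ‖w - s‖ := by
      rw [div_mul_eq_mul_div, le_div_iff₀ hi]; gcongr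
    linarith
  have b1 : ‖bk w s‖ ≤ 1 + ‖w‖ / |w.im| := by rw [e, div_le_iff₀ h0]; exact hs
  have b2 : ‖bk w s‖ ≤ |w.im|⁻¹ * |s| := by
    rw [e, div_eq_inv_mul]; gcongr
  have p1 : 0 ≤ |w.im|⁻¹ := by positivity
  have p2 : 0 ≤ ‖w‖ / |w.im| := by positivity
  rcases le_total 1 |s| with h | h
  · rw [min_eq_left h]; linarith
  · rw [min_eq_right h]
    have : 0 ≤ (1 + ‖w‖ / |w.im|) * |s| := by positivity
    linarith

theorem bk_scale (w : ℂ) {y : ℝ} (hy : 0 < y) (t : ℝ) : bk (y * w) t = bk w (t / y) := by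
  unfold bk
  have : (y:ℂ) ≠ 0 := by exact_mod_cast hy.ne'
  push_cast
  rw [show (y:ℂ) * w - t = y * (w - t / y) by field_simp]
  rw [div_mul_eq_div_div]

theorem bt_im_scale {w : ℂ} (hw : w.im ≠ 0) {y : ℝ} (hy : 0 < y) : ((y:ℂ) * w).im ≠ 0 := by
  simp [hw, hy.ne']

theorem bk_int {τ : Measure ℝ} [IsProbabilityMeasure τ] {w : ℂ} (hw : w.im ≠ 0) :
    Integrable (bk w) τ := by
  obtain ⟨C, hC, h⟩ := bk_bound hw
  refine Integrable.of_bound (C := C) (bk_cont hw).aestronglyMeasurable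
    (Eventually.of_forall fun t => (h t).trans ?_)
  exact mul_le_of_le_one_right hC (min_le_left _ _)

theorem bt_G {τ : Measure ℝ} [IsProbabilityMeasure τ] {z : ℂ} (hz : z.im ≠ 0) :
    z * cauchyG τ z = 1 + bpsi τ z := by
  unfold cauchyG bpsi
  rw [← integral_const_mul]
  have : (1:ℂ) = ∫ t : ℝ, (1:ℂ) ∂τ := by simp
  rw [this, ← integral_add (integrable_const _) (bk_int hz)]
  refine integral_congr_ae (Eventually.of_forall fun t => ?_)
  have := bk_ne hz t
  simp only [bk]
  field_simp
  ring

theorem bpsi_conj (τ : Measure ℝ) (z : ℂ) :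
    bpsi τ ((starRingEnd ℂ) z) = (starRingEnd ℂ) (bpsi τ z) := by
  unfold bpsi
  rw [← integral_conj]
  congr 1
  ext t
  simp [bk]

theorem bk_expand {w : ℂ} (hw : w.im ≠ 0) (s : ℝ) (p : ℕ) :
    bk w s = ∑ j ∈ Finset.range p, (s / w) ^ (j + 1) + (s / w) ^ p * bk w s := by
  have hw0 : w ≠ 0 := by rintro rfl; simp at hw
  induction p with
  | zero => simp
  | succ p ih =>
    rw [Finset.sum_range_succ]
    conv_lhs => rw [ih]
    rw [add_assoc]
    congr 1
    have := bk_ne hw s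
    unfold bk
    rw [pow_succ]
    field_simp
    ring

theorem bt_psi_pos {μ : Measure ℝ} [IsProbabilityMeasure μ] {β : ℝ} {p : ℕ} (hβ0 : 0 < β)
    (h1 : (p:ℝ) ≤ β) (h2 : β ≤ p + 1) (hint : Integrable (fun t : ℝ => |t| ^ β) μ) :
    ∃ P : Polynomial ℂ, P.eval 0 = 0 ∧ ∀ w : ℂ, w.im ≠ 0 →
      (fun y : ℝ => bpsi μ (y * w) - P.eval ((y * w)⁻¹)) =O[atTop] fun y : ℝ => y ^ (-β) := by
  have hmom : ∀ j < p, Integrable (fun t : ℝ => (t:ℂ) ^ (j + 1)) μ := by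
    intro j hj
    refine Integrable.mono' ((integrable_const (1:ℝ)).add hint)
      (by fun_prop) (Eventually.of_forall fun t => ?_)
    simp only [norm_pow, Complex.norm_real, Real.norm_eq_abs, Pi.add_apply]
    rcases le_total |t| 1 with h | h
    · have := pow_le_one₀ (n := j + 1) (abs_nonneg t) h
      have : 0 ≤ |t| ^ β := by positivity
      linarith
    · have : |t| ^ (j + 1) ≤ |t| ^ β := by
        rw [← Real.rpow_natCast]
        refine Real.rpow_le_rpow_of_exponent_le h (le_trans ?_ h1)
        exact_mod_cast hj
      linarith
  refine ⟨∑ j ∈ Finset.range p, Polynomial.C (∫ t : ℝ, (t:ℂ) ^ (j + 1) ∂μ) * Polynomial.X ^ (j + 1),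
    by simp [Polynomial.eval_finsetSum], fun w hw => ?_⟩
  have hw0 : w ≠ 0 := by rintro rfl; simp at hw
  obtain ⟨C, hC, hb⟩ := bk_bound hw
  refine IsBigO.of_bound (‖w‖⁻¹ ^ p * C * ∫ t : ℝ, |t| ^ β ∂μ) ?_
  filter_upwards [eventually_gt_atTop 0] with y hy
  have hyw := bt_im_scale hw hy
  have e : bpsi μ (y * w) - Polynomial.eval ((y * w)⁻¹) (∑ j ∈ Finset.range p,
      Polynomial.C (∫ t : ℝ, (t:ℂ) ^ (j + 1) ∂μ) * Polynomial.X ^ (j + 1)) =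
      ∫ t : ℝ, ((t:ℂ) / (y * w)) ^ p * bk (y * w) t ∂μ := by
    rw [Polynomial.eval_finsetSum]
    simp only [Polynomial.eval_mul, Polynomial.eval_C, Polynomial.eval_pow, Polynomial.eval_X]
    simp_rw [← integral_mul_const]
    rw [← integral_finsetSum _ (fun j hj => (hmom j (Finset.mem_range.1 hj)).mul_const _)]
    unfold bpsi
    rw [← integral_sub (bk_int hyw)
      (integrable_finsetSum _ (fun j hj => (hmom j (Finset.mem_range.1 hj)).mul_const _))]
    congr 1
    ext t
    rw [sub_eq_iff_eq_add']
    conv_lhs => rw [bk_expand hyw t p]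
    simp only [div_eq_mul_inv, mul_pow]
  rw [e, Real.norm_of_nonneg (Real.rpow_nonneg hy.le _)]
  have e3 : ‖w‖⁻¹ ^ p * C * (∫ t : ℝ, |t| ^ β ∂μ) * y ^ (-β) =
      ∫ t : ℝ, ‖w‖⁻¹ ^ p * C * y ^ (-β) * |t| ^ β ∂μ := by
    rw [integral_const_mul]; ring
  rw [e3]
  refine norm_integral_le_of_norm_le (hint.const_mul _) (Eventually.of_forall fun t => ?_)
  rw [bk_scale w hy, norm_mul, norm_pow, norm_div, norm_mul, Complex.norm_real, Complex.norm_real,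
    Real.norm_eq_abs, Real.norm_of_nonneg hy.le]
  have hs : |t / y| = |t| / y := by rw [abs_div, abs_of_pos hy]
  have key : (|t| / y) ^ p * min 1 (|t| / y) ≤ y ^ (-β) * |t| ^ β := by
    have : y ^ (-β) * |t| ^ β = (|t| / y) ^ β := by
      rw [Real.div_rpow (abs_nonneg t) hy.le, Real.rpow_neg hy.le]; ring
    rw [this]
    have h0 : 0 ≤ |t| / y := by positivity
    rcases h0.eq_or_lt with h0 | h0
    · rw [← h0]; simp [Real.zero_rpow hβ0.ne']
    rcases le_total (|t| / y) 1 with h | h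
    · rw [min_eq_right h, ← pow_succ, ← Real.rpow_natCast]
      exact Real.rpow_le_rpow_of_exponent_ge h0 h (by exact_mod_cast h2)
    · rw [min_eq_left h, mul_one, ← Real.rpow_natCast]
      exact Real.rpow_le_rpow_of_exponent_le h h1
  calc (|t| / (y * ‖w‖)) ^ p * ‖bk w (t / y)‖
      ≤ (|t| / (y * ‖w‖)) ^ p * (C * min 1 |t / y|) := by gcongr; exact hb _
    _ = ‖w‖⁻¹ ^ p * C * ((|t| / y) ^ p * min 1 (|t| / y)) := by
      rw [hs, show |t| / (y * ‖w‖) = ‖w‖⁻¹ * (|t| / y) by field_simp, mul_pow]; ring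
    _ ≤ ‖w‖⁻¹ ^ p * C * (y ^ (-β) * |t| ^ β) := by gcongr
    _ = _ := by ring

theorem bt_psi_zero {μ : Measure ℝ} [IsProbabilityMeasure μ] (hs : μ (Iio (0:ℝ)) = 0)
    (h : BTail (fun x => (μ (Ioi x)).toReal) 0) (w : ℂ) (hw : w.im ≠ 0) :
    (fun y : ℝ => bpsi μ (y * w)) =O[atTop] fun y : ℝ => (μ (Ioi y)).toReal := by
  obtain ⟨C, hC, hb⟩ := bk_bound hw
  obtain ⟨D, x0, h1, hD, hJ⟩ := bt_J hs h (N := 1) (by norm_num)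
  refine IsBigO.of_bound (C * D) ?_
  filter_upwards [eventually_ge_atTop x0] with y hy
  have hy0 : 0 < y := by linarith
  rw [Real.norm_of_nonneg ENNReal.toReal_nonneg, mul_assoc]
  refine le_trans ?_ (mul_le_mul_of_nonneg_left (hJ y hy) hC)
  rw [← integral_const_mul]
  refine norm_integral_le_of_norm_le ((bt_min_int' hy0 1).const_mul _)
    (Eventually.of_forall fun t => ?_)
  rw [bk_scale w hy0]
  refine (hb _).trans (le_of_eq ?_)
  rw [abs_div, abs_of_pos hy0, pow_one]

theorem bt_choose {α : ℝ} (hα : 0 < α) :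
    ∃ (p : ℕ) (β : ℝ), 0 < β ∧ β < α ∧ (p:ℝ) ≤ β ∧ β ≤ p + 1 ∧ α < β + 1 ∧ α < 2 * β := by
  have hc : 0 < ⌈α⌉₊ := Nat.ceil_pos.2 hα
  obtain ⟨p, hp⟩ : ∃ p, ⌈α⌉₊ = p + 1 := ⟨⌈α⌉₊ - 1, by omega⟩
  have h1 : α ≤ p + 1 := by have := Nat.le_ceil α; rw [hp] at this; exact_mod_cast this
  have h2 : (p:ℝ) < α := by
    have := Nat.lt_ceil (a := α) (n := p); rw [hp] at this; exact this.1 (by omega)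
  have hm : max (p:ℝ) (α / 2) < α := max_lt h2 (by linarith)
  have m1 := le_max_left (p:ℝ) (α / 2)
  have m2 := le_max_right (p:ℝ) (α / 2)
  refine ⟨p, (α + max (p:ℝ) (α / 2)) / 2, ?_, ?_, ?_, ?_, ?_, ?_⟩ <;> linarith

end

open MeasureTheory Filter Set Complex Asymptotics
noncomputable section

/-- `h(yw) = Q(1/(yw)) + o(T(y))` along every nonreal ray -/
def BR (T : ℝ → ℝ) (h : ℂ → ℂ) (Q : Polynomial ℂ) : Prop :=
  ∀ w : ℂ, w.im ≠ 0 → (fun y : ℝ => h (y * w) - Q.eval ((y * w)⁻¹)) =o[atTop] T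

theorem bt_inv_tendsto {w : ℂ} (hw : w.im ≠ 0) :
    Tendsto (fun y : ℝ => ((y:ℂ) * w)⁻¹) atTop (nhds 0) := by
  have hw0 : w ≠ 0 := by rintro rfl; simp at hw
  rw [tendsto_zero_iff_norm_tendsto_zero]
  have : Tendsto (fun y : ℝ => y⁻¹ * ‖w‖⁻¹) atTop (nhds (0 * ‖w‖⁻¹)) :=
    tendsto_inv_atTop_zero.mul_const _
  rw [zero_mul] at this
  refine this.congr' ?_
  filter_upwards [eventually_gt_atTop 0] with y hy
  simp [abs_of_pos hy, mul_comm]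

theorem bt_inv_O (w : ℂ) :
    (fun y : ℝ => ((y:ℂ) * w)⁻¹) =O[atTop] fun y : ℝ => y⁻¹ := by
  refine IsBigO.of_bound ‖w‖⁻¹ (Eventually.of_forall fun y => ?_)
  simp [mul_comm]

theorem bt_poly_tendsto (Q : Polynomial ℂ) {w : ℂ} (hw : w.im ≠ 0) :
    Tendsto (fun y : ℝ => Q.eval (((y:ℂ) * w)⁻¹)) atTop (nhds (Q.eval 0)) :=
  (Q.continuous.tendsto 0).comp (bt_inv_tendsto hw)

theorem bt_poly_O1 (Q : Polynomial ℂ) {w : ℂ} (hw : w.im ≠ 0) :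
    (fun y : ℝ => Q.eval (((y:ℂ) * w)⁻¹)) =O[atTop] fun _ => (1:ℝ) :=
  (bt_poly_tendsto Q hw).isBigO_one ℝ

theorem bt_poly_O (Q : Polynomial ℂ) (h0 : Q.eval 0 = 0) {w : ℂ} (hw : w.im ≠ 0) :
    (fun y : ℝ => Q.eval (((y:ℂ) * w)⁻¹)) =O[atTop] fun y : ℝ => y⁻¹ := by
  obtain ⟨R, rfl⟩ : Polynomial.X ∣ Q := by
    rw [Polynomial.X_dvd_iff, Polynomial.coeff_zero_eq_eval_zero, h0]
  have := (bt_inv_O w).mul (bt_poly_O1 R hw)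
  simpa using this

theorem bt_o_mul_O1 {T : ℝ → ℝ} {f g : ℝ → ℂ} (hf : f =o[atTop] T)
    (hg : g =O[atTop] fun _ => (1:ℝ)) : (fun y => f y * g y) =o[atTop] T := by
  simpa using hf.mul_isBigO hg

theorem BR.add {T h1 h2 Q1 Q2} (a : BR T h1 Q1) (b : BR T h2 Q2) :
    BR T (fun z => h1 z + h2 z) (Q1 + Q2) := by
  intro w hw
  refine ((a w hw).add (b w hw)).congr_left fun y => ?_
  simp; ring

theorem BR.O1 {T h Q} (hT : T =O[atTop] fun _ => (1:ℝ)) (a : BR T h Q) {w : ℂ} (hw : w.im ≠ 0) :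
    (fun y : ℝ => h (y * w)) =O[atTop] fun _ => (1:ℝ) := by
  refine (((a w hw).isBigO.trans hT).add (bt_poly_O1 Q hw)).congr_left fun y => ?_
  ring

theorem BR.mul {T h1 h2 Q1 Q2} (hT : T =O[atTop] fun _ => (1:ℝ)) (a : BR T h1 Q1)
    (b : BR T h2 Q2) : BR T (fun z => h1 z * h2 z) (Q1 * Q2) := by
  intro w hw
  refine ((bt_o_mul_O1 (a w hw) (b.O1 hT hw)).add
    (bt_o_mul_O1 (b w hw) (bt_poly_O1 Q1 hw))).congr_left fun y => ?_
  simp; ring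

theorem BR.one {T} : BR T (fun _ => 1) 1 := by
  intro w hw
  simp

theorem BR.pow {T h Q} (hT : T =O[atTop] fun _ => (1:ℝ)) (a : BR T h Q) (n : ℕ) :
    BR T (fun z => h z ^ n) (Q ^ n) := by
  induction n with
  | zero => simpa using BR.one
  | succ n ih => simpa only [pow_succ] using ih.mul hT a

theorem BR.geom {T h Q} (hT : T =O[atTop] fun _ => (1:ℝ)) (a : BR T h Q) (n : ℕ) :
    BR T (fun z => ∑ k ∈ Finset.range n, h z ^ k) (∑ k ∈ Finset.range n, Q ^ k) := by
  induction n with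
  | zero => intro w hw; simp
  | succ n ih => simpa only [Finset.sum_range_succ] using ih.add (a.pow hT n)

theorem bt_H {T b : ℝ → ℝ} (hT : T =O[atTop] fun _ => (1:ℝ))
    (hb0 : Tendsto b atTop (nhds 0))
    (hb1 : (fun y => y⁻¹ * b y) =o[atTop] T) (hb2 : (fun y => b y * b y) =o[atTop] T)
    {N : ℕ} (hN : (fun y : ℝ => y⁻¹ ^ N) =o[atTop] T) {u v : ℂ → ℂ} {P1 P2 : Polynomial ℂ}
    (h1 : P1.eval 0 = 0) (h2 : P2.eval 0 = 0)
    (hu : ∀ w : ℂ, w.im ≠ 0 → (fun y : ℝ => u (y * w) - P1.eval ((y * w)⁻¹)) =O[atTop] b)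
    (hv : ∀ w : ℂ, w.im ≠ 0 → (fun y : ℝ => v (y * w) - P2.eval ((y * w)⁻¹)) =O[atTop] b) :
    (∃ Q, Q.eval 0 = 0 ∧ BR T (fun z => u z * v z * (2 + u z + v z) * (1 - u z * v z)⁻¹) Q) ∧
    ∀ w : ℂ, w.im ≠ 0 → Tendsto (fun y : ℝ => u (y * w)) atTop (nhds 0) ∧
      Tendsto (fun y : ℝ => v (y * w)) atTop (nhds 0) := by
  have hlim : ∀ {f : ℂ → ℂ} {P : Polynomial ℂ}, P.eval 0 = 0 → (∀ w : ℂ, w.im ≠ 0 →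
      (fun y : ℝ => f (y * w) - P.eval ((y * w)⁻¹)) =O[atTop] b) → ∀ w : ℂ, w.im ≠ 0 →
      Tendsto (fun y : ℝ => f (y * w)) atTop (nhds 0) := by
    intro f P hP hf w hw
    have a1 := (hf w hw).trans_tendsto hb0
    have a2 := a1.add (bt_poly_tendsto P hw)
    rw [hP, add_zero] at a2
    exact a2.congr fun y => by ring
  have hu0 := hlim h1 hu
  have hv0 := hlim h2 hv
  refine ⟨?_, fun w hw => ⟨hu0 w hw, hv0 w hw⟩⟩
  have hq : BR T (fun z => u z * v z) (P1 * P2) := by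
    intro w hw
    have t1 := ((bt_poly_O P1 h1 hw).mul (hv w hw)).trans_isLittleO hb1
    have t2 := ((bt_poly_O P2 h2 hw).mul (hu w hw)).trans_isLittleO hb1
    have t3 := ((hu w hw).mul (hv w hw)).trans_isLittleO hb2
    refine ((t1.add t2).add t3).congr_left fun y => ?_
    simp; ring
  have hq0 : (P1 * P2).eval 0 = 0 := by simp [h1]
  have hqf : ∀ {f : ℂ → ℂ} {P : Polynomial ℂ}, P.eval 0 = 0 → (∀ w : ℂ, w.im ≠ 0 →
      (fun y : ℝ => f (y * w) - P.eval ((y * w)⁻¹)) =O[atTop] b) →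
      BR T (fun z => u z * v z * f z) (P1 * P2 * P) := by
    intro f P hP hf w hw
    have t1 := ((bt_poly_O _ hq0 hw).mul (hf w hw)).trans_isLittleO hb1
    have t2 := bt_o_mul_O1 (hq w hw) ((hlim hP hf w hw).isBigO_one ℝ)
    refine (t1.add t2).congr_left fun y => ?_
    simp; ring
  have hn : BR T (fun z => u z * v z * (2 + u z + v z))
      (P1 * P2 + P1 * P2 + P1 * P2 * P1 + P1 * P2 * P2) := by
    have := ((hq.add hq).add (hqf h1 hu)).add (hqf h2 hv)
    convert this using 2 with z
    ring
  have hr : BR T (fun z => (1 - u z * v z)⁻¹) (∑ k ∈ Finset.range N, (P1 * P2) ^ k) := by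
    intro w hw
    have hqlim : Tendsto (fun y : ℝ => u (y * w) * v (y * w)) atTop (nhds 0) := by
      simpa using (hu0 w hw).mul (hv0 w hw)
    have hrlim : Tendsto (fun y : ℝ => (1 - u (y * w) * v (y * w))⁻¹) atTop (nhds 1) := by
      have := (hqlim.const_sub 1).inv₀ (by norm_num)
      simpa using this
    have hqN : (fun y : ℝ => (u (y * w) * v (y * w)) ^ N) =o[atTop] T := by
      have a1 := hq.pow hT N w hw
      have a2 := ((bt_poly_O _ hq0 hw).pow N).trans_isLittleO hN
      refine (a1.add a2).congr_left fun y => ?_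
      simp
    have t := bt_o_mul_O1 hqN (hrlim.isBigO_one ℝ)
    refine ((hq.geom hT N w hw).add t).congr' ?_ EventuallyEq.rfl
    have hne := hqlim.eventually_ne (show (0:ℂ) ≠ 1 by norm_num)
    filter_upwards [hne] with y hy
    have : 1 - u (y * w) * v (y * w) ≠ 0 := sub_ne_zero.2 hy.symm
    have g := mul_neg_geom_sum (u (y * w) * v (y * w)) N
    generalize u (y * w) * v (y * w) = q at *
    have : (1 - q)⁻¹ = ∑ k ∈ Finset.range N, q ^ k + q ^ N * (1 - q)⁻¹ := by
      field_simp; rw [g]; ring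
    linear_combination -this
  exact ⟨_, by simp [h1], hn.mul hT hr⟩

end

open MeasureTheory Filter Set Complex Asymptotics
noncomputable section

theorem bk_mul {w v : ℂ} (hw : w.im ≠ 0) (hv : v.im ≠ 0) (h : w ≠ v) (x : ℝ) :
    bk w x * bk v x = (w * bk w x - v * bk v x) / (v - w) := by
  have h1 := bk_ne hw x
  have h2 := bk_ne hv x
  have h3 : v - w ≠ 0 := sub_ne_zero.2 h.symm
  unfold bk
  field_simp
  ring

theorem bt_pf (s : Finset ℂ) (hs : s.Nonempty) (him : ∀ w ∈ s, w.im ≠ 0) :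
    ∃ c : ℂ → ℂ, (∀ x : ℝ, ∏ w ∈ s, bk w x = ∑ w ∈ s, c w * bk w x) ∧
      ∀ j : ℕ, 1 ≤ j → j < s.card → ∑ w ∈ s, c w * w⁻¹ ^ j = 0 := by
  classical
  induction hs using Finset.Nonempty.cons_induction with
  | singleton a => exact ⟨fun _ => 1, by simp, fun j h1 h2 => by simp at h2; omega⟩
  | cons v s hvs hs ih =>
    obtain ⟨c, hc1, hc2⟩ := ih (fun w hw => him w (Finset.mem_cons_of_mem hw))
    have hv : v.im ≠ 0 := him v (Finset.mem_cons_self _ _)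
    have hv0 : v ≠ 0 := by rintro rfl; simp at hv
    have hne : ∀ w ∈ s, w ≠ v := fun w hw h => hvs (h ▸ hw)
    have hsum : ∀ f : ℂ → ℂ,
        ∑ w ∈ Finset.cons v s hvs, (if w = v then -∑ a ∈ s, c a * v / (v - a)
          else c w * w / (v - w)) * f w = ∑ w ∈ s, c w * ((w * f w - v * f v) / (v - w)) := by
      intro f
      rw [Finset.sum_cons, if_pos rfl]
      have : ∑ w ∈ s, (if w = v then -∑ a ∈ s, c a * v / (v - a)
          else c w * w / (v - w)) * f w = ∑ w ∈ s, c w * w / (v - w) * f w :=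
        Finset.sum_congr rfl fun w hw => by rw [if_neg (hne w hw)]
      rw [this, ← Finset.sum_neg_distrib, Finset.sum_mul, ← Finset.sum_add_distrib]
      refine Finset.sum_congr rfl fun w hw => ?_
      ring
    refine ⟨fun w => if w = v then -∑ a ∈ s, c a * v / (v - a) else c w * w / (v - w), ?_, ?_⟩
    · intro x
      rw [hsum (fun w => bk w x), Finset.prod_cons, hc1, Finset.mul_sum]
      refine Finset.sum_congr rfl fun w hw => ?_
      rw [← bk_mul (him w (Finset.mem_cons_of_mem hw)) hv (hne w hw)]
      ring
    · intro j h1 h2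
      rw [hsum (fun w => w⁻¹ ^ j)]
      obtain ⟨i, rfl⟩ : ∃ i, j = i + 1 := ⟨j - 1, by omega⟩
      rw [Finset.card_cons] at h2
      have : ∀ w ∈ s, c w * ((w * w⁻¹ ^ (i + 1) - v * v⁻¹ ^ (i + 1)) / (v - w)) =
          ∑ k ∈ Finset.range i, v⁻¹ ^ (i - 1 - k + 1) * (c w * w⁻¹ ^ (k + 1)) := by
        intro w hw
        have hw0 : w ≠ 0 := by
          have := him w (Finset.mem_cons_of_mem hw)
          rintro rfl; simp at this
        have h3 : v - w ≠ 0 := sub_ne_zero.2 (hne w hw).symm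
        have e1 : w * w⁻¹ ^ (i + 1) - v * v⁻¹ ^ (i + 1) = w⁻¹ ^ i - v⁻¹ ^ i := by
          rw [pow_succ', pow_succ', mul_inv_cancel_left₀ hw0, mul_inv_cancel_left₀ hv0]
        have e2 : w⁻¹ - v⁻¹ = (v - w) * (w⁻¹ * v⁻¹) := by field_simp
        rw [e1, ← geom_sum₂_mul, e2, ← mul_assoc, mul_div_right_comm, mul_div_cancel_right₀ _ h3,
          Finset.sum_mul, Finset.mul_sum]
        refine Finset.sum_congr rfl fun k hk => ?_
        ring
      rw [Finset.sum_congr rfl this, Finset.sum_comm]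
      refine Finset.sum_eq_zero fun k hk => ?_
      rw [← Finset.mul_sum, hc2 (k + 1) (by omega) (by have := Finset.mem_range.1 hk; omega), mul_zero]

theorem bt_kill {T : ℝ → ℝ} {h : ℂ → ℂ} {Q : Polynomial ℂ} (hQ0 : Q.eval 0 = 0) (hB : BR T h Q)
    {N : ℕ} (hN : (fun y : ℝ => y⁻¹ ^ N) =o[atTop] T) (s : Finset ℂ) (him : ∀ w ∈ s, w.im ≠ 0)
    (hcard : N ≤ s.card) (c : ℂ → ℂ)
    (hc : ∀ j : ℕ, 1 ≤ j → j < s.card → ∑ w ∈ s, c w * w⁻¹ ^ j = 0) :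
    (fun y : ℝ => ∑ w ∈ s, c w * h (y * w)) =o[atTop] T := by
  have h1 : (fun y : ℝ => ∑ w ∈ s, c w * (h (y * w) - Q.eval ((y * w)⁻¹))) =o[atTop] T :=
    IsLittleO.fun_sum fun w hw => (hB w (him w hw)).const_mul_left _
  have h2 : (fun y : ℝ => ∑ w ∈ s, c w * Q.eval (((y:ℂ) * w)⁻¹)) =o[atTop] T := by
    have e : ∀ y : ℝ, ∑ w ∈ s, c w * Q.eval (((y:ℂ) * w)⁻¹) =
        ∑ j ∈ Finset.range (Q.natDegree + 1), (Q.coeff j * ∑ w ∈ s, c w * w⁻¹ ^ j) * ((y:ℂ)⁻¹) ^ j := by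
      intro y
      simp_rw [Polynomial.eval_eq_sum_range, Finset.mul_sum, Finset.sum_mul]
      rw [Finset.sum_comm]
      refine Finset.sum_congr rfl fun j _ => Finset.sum_congr rfl fun w _ => ?_
      rw [mul_inv, mul_pow]; ring
    simp_rw [e]
    refine IsLittleO.fun_sum fun j _ => ?_
    rcases Nat.eq_zero_or_pos j with rfl | hj
    · rw [Polynomial.coeff_zero_eq_eval_zero, hQ0]; simp
    rcases lt_or_ge j s.card with hj2 | hj2
    · rw [hc j hj hj2]; simp
    · refine IsLittleO.const_mul_left (IsBigO.trans_isLittleO ?_ hN) _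
      refine IsBigO.of_bound 1 ?_
      filter_upwards [eventually_ge_atTop 1] with y hy
      have : 0 ≤ y := by linarith
      simp only [norm_pow, norm_inv, Complex.norm_real, one_mul]
      refine pow_le_pow_of_le_one (by positivity) ?_ (hcard.trans hj2)
      rw [Real.norm_of_nonneg this]
      exact inv_le_one_of_one_le₀ hy
  refine (h1.add h2).congr_left fun y => ?_
  rw [← Finset.sum_add_distrib]
  exact Finset.sum_congr rfl fun w _ => by ring

theorem bt_rel_upper {μ ν ρ : Measure ℝ} [IsProbabilityMeasure μ] [IsProbabilityMeasure ν]
    [IsProbabilityMeasure ρ] {z : ℂ} (hz : z.im ≠ 0)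
    (hK : Ktrans ρ z = Ktrans μ z + Ktrans ν z) (h1 : 1 + bpsi μ z ≠ 0) (h2 : 1 + bpsi ν z ≠ 0)
    (h3 : 1 - bpsi μ z * bpsi ν z ≠ 0) :
    bpsi ρ z = bpsi μ z + bpsi ν z + bpsi μ z * bpsi ν z * (2 + bpsi μ z + bpsi ν z) *
      (1 - bpsi μ z * bpsi ν z)⁻¹ := by
  have hz0 : z ≠ 0 := by rintro rfl; simp at hz
  have g1 := bt_G (τ := μ) hz
  have g2 := bt_G (τ := ν) hz
  have g3 := bt_G (τ := ρ) hz
  unfold Ktrans at hK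
  generalize bpsi μ z = u at *
  generalize bpsi ν z = v at *
  generalize bpsi ρ z = r at *
  have e1 : (cauchyG μ z)⁻¹ = z / (1 + u) := by
    rw [← g1]; field_simp
  have e2 : (cauchyG ν z)⁻¹ = z / (1 + v) := by
    rw [← g2]; field_simp
  have e3 : (cauchyG ρ z)⁻¹ = z * (1 - u * v) / ((1 + u) * (1 + v)) := by
    have : (cauchyG ρ z)⁻¹ = (cauchyG μ z)⁻¹ + (cauchyG ν z)⁻¹ - z := by linear_combination -hK
    rw [this, e1, e2]; field_simp; ring
  have e4 : cauchyG ρ z = (1 + u) * (1 + v) / (z * (1 - u * v)) := by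
    rw [← inv_inv (cauchyG ρ z), e3, inv_div]
  rw [e4] at g3
  have : r = (1 + u) * (1 + v) / (1 - u * v) - 1 := by
    rw [eq_sub_iff_add_eq', ← g3]; field_simp
  rw [this]; field_simp; ring

theorem bt_rel {μ ν ρ : Measure ℝ} [IsProbabilityMeasure μ] [IsProbabilityMeasure ν]
    [IsProbabilityMeasure ρ] 
    (hK : ∀ z : ℂ, 0 < z.im → Ktrans ρ z = Ktrans μ z + Ktrans ν z)
    {z : ℂ} (hz : z.im ≠ 0) (h1 : 1 + bpsi μ z ≠ 0) (h2 : 1 + bpsi ν z ≠ 0)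
    (h3 : 1 - bpsi μ z * bpsi ν z ≠ 0) :
    bpsi ρ z = bpsi μ z + bpsi ν z + bpsi μ z * bpsi ν z * (2 + bpsi μ z + bpsi ν z) *
      (1 - bpsi μ z * bpsi ν z)⁻¹ := by
  rcases lt_or_gt_of_ne hz with h | h
  · have inj := (starRingEnd ℂ).injective
    have hz' : ((starRingEnd ℂ) z).im ≠ 0 := by simpa using hz
    have hh := bt_rel_upper (μ := μ) (ν := ν) (ρ := ρ) hz' (hK _ (by simpa using h))
    simp only [bpsi_conj] at hh
    apply inj
    have := hh ?_ ?_ ?_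
    · rw [this]; simp only [map_add, map_mul, map_sub, map_inv₀, map_one, map_ofNat]
    · intro h0; apply h1; apply inj; simpa using h0
    · intro h0; apply h2; apply inj; simpa using h0
    · intro h0; apply h3; apply inj; simpa using h0
  · exact bt_rel_upper hz (hK z h) h1 h2 h3

/-- main transform consequence -/
theorem bt_prod {T : ℝ → ℝ} {μ ν ρ : Measure ℝ} [IsProbabilityMeasure μ] [IsProbabilityMeasure ν]
    [IsProbabilityMeasure ρ] {H : ℂ → ℂ} {Q : Polynomial ℂ} (hQ0 : Q.eval 0 = 0) (hB : BR T H Q)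
    {N : ℕ} (hN : (fun y : ℝ => y⁻¹ ^ N) =o[atTop] T)
    (hrel : ∀ w : ℂ, w.im ≠ 0 → ∀ᶠ y : ℝ in atTop,
      bpsi ρ (y * w) = bpsi μ (y * w) + bpsi ν (y * w) + H (y * w))
    (s : Finset ℂ) (hs : s.Nonempty) (him : ∀ w ∈ s, w.im ≠ 0) (hcard : N ≤ s.card) :
    (fun y : ℝ => ∫ t, ∏ w ∈ s, bk w (t / y) ∂ρ - ∫ t, ∏ w ∈ s, bk w (t / y) ∂μ -
      ∫ t, ∏ w ∈ s, bk w (t / y) ∂ν) =o[atTop] T := by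
  obtain ⟨c, hc1, hc2⟩ := bt_pf s hs him
  refine (bt_kill hQ0 hB hN s him hcard c hc2).congr' ?_ EventuallyEq.rfl
  have hall : ∀ᶠ y : ℝ in atTop, ∀ w ∈ s,
      bpsi ρ (y * w) = bpsi μ (y * w) + bpsi ν (y * w) + H (y * w) :=
    (Filter.eventually_all_finset s).2 fun w hw => hrel w (him w hw)
  filter_upwards [hall, eventually_gt_atTop 0] with y hy hy0
  have key : ∀ τ : Measure ℝ, IsProbabilityMeasure τ → ∫ t, ∏ w ∈ s, bk w (t / y) ∂τ =
      ∑ w ∈ s, c w * bpsi τ (y * w) := by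
    intro τ _
    simp_rw [hc1, ← bk_scale _ hy0]
    rw [integral_finsetSum _ fun w hw => (bk_int (bt_im_scale (him w hw) hy0)).const_mul _]
    simp_rw [integral_const_mul]
    rfl
  rw [key ρ inferInstance, key μ inferInstance, key ν inferInstance, ← Finset.sum_sub_distrib,
    ← Finset.sum_sub_distrib]
  refine Finset.sum_congr rfl fun w hw => ?_
  rw [hy w hw]; ring

end

open MeasureTheory Filter Set Complex Asymptotics
noncomputable section

theorem bt_zt {x ε : ℝ} (t : ℝ) : ((x:ℂ) + ε * I - t) = ⟨x - t, ε⟩ := by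
  apply Complex.ext <;> simp

theorem bt_re_inv (x ε t : ℝ) :
    (((x:ℂ) + ε * I - t)⁻¹).re = (x - t) * ((x - t) ^ 2 + ε ^ 2)⁻¹ := by
  rw [bt_zt, Complex.inv_re, Complex.normSq_mk, div_eq_mul_inv]; simp only [pow_two]

theorem bt_im_inv (x ε t : ℝ) :
    (((x:ℂ) + ε * I - t)⁻¹).im = -(ε * ((x - t) ^ 2 + ε ^ 2)⁻¹) := by
  rw [bt_zt, Complex.inv_im, Complex.normSq_mk, div_eq_mul_inv]; simp only [pow_two]; ring

theorem bt_normSq_inv (x ε t : ℝ) :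
    ‖((x:ℂ) + ε * I - t)⁻¹‖ ^ 2 = ((x - t) ^ 2 + ε ^ 2)⁻¹ := by
  rw [bt_zt, norm_inv, inv_pow, Complex.sq_norm, Complex.normSq_mk]; simp only [pow_two]

theorem bt_den_int {τ : Measure ℝ} [IsProbabilityMeasure τ] (x : ℝ) {ε : ℝ} (hε : 0 < ε) :
    Integrable (fun t : ℝ => ((x - t) ^ 2 + ε ^ 2)⁻¹) τ := by
  refine Integrable.of_bound (C := (ε ^ 2)⁻¹) (Continuous.aestronglyMeasurable
    (Continuous.inv₀ (by fun_prop) fun t => by positivity)) (Eventually.of_forall fun t => ?_)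
  rw [Real.norm_of_nonneg (by positivity)]
  gcongr
  nlinarith [sq_nonneg (x - t)]

theorem bt_inv_int {τ : Measure ℝ} [IsProbabilityMeasure τ] (x : ℝ) {ε : ℝ} (hε : 0 < ε) :
    Integrable (fun t : ℝ => ((x:ℂ) + ε * I - t)⁻¹) τ := by
  have hne : ∀ t : ℝ, ((x:ℂ) + ε * I - t) ≠ 0 := fun t => bk_ne (by simp [hε.ne']) t
  refine Integrable.of_bound (C := ε⁻¹) (Continuous.aestronglyMeasurable
    (Continuous.inv₀ (by fun_prop) hne)) (Eventually.of_forall fun t => ?_)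
  rw [norm_inv]
  have := Complex.abs_im_le_norm ((x:ℂ) + ε * I - t)
  rw [show ((x:ℂ) + ε * I - t).im = ε by simp, abs_of_pos hε] at this
  gcongr

theorem bt_G_im {τ : Measure ℝ} [IsProbabilityMeasure τ] (x : ℝ) {ε : ℝ} (hε : 0 < ε) :
    (cauchyG τ (x + ε * I)).im = -(ε * ∫ t, ((x - t) ^ 2 + ε ^ 2)⁻¹ ∂τ) := by
  unfold cauchyG
  have := integral_im (bt_inv_int (τ := τ) x hε)
  simp only [RCLike.im_eq_complex_im] at this
  rw [← this]
  simp_rw [bt_im_inv]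
  rw [integral_neg, integral_const_mul]

theorem bt_F {τ : Measure ℝ} [IsProbabilityMeasure τ] (hs : τ (Iio (0:ℝ)) = 0) (a : ℝ) :
    ∃ d : ℝ, 0 < d ∧ ∀ x ε : ℝ, a ≤ x → x < 0 → 0 < ε → ε ≤ 1 →
      ((cauchyG τ (x + ε * I))⁻¹).re ≤ x ∧ ((cauchyG τ (x + ε * I))⁻¹).im ≤ ε / (x ^ 2 * d) := by
  have hdpos : ∀ (x : ℝ) {ε : ℝ}, 0 < ε → 0 < ∫ t, ((x - t) ^ 2 + ε ^ 2)⁻¹ ∂τ := by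
    intro x ε hε
    rw [integral_pos_iff_support_of_nonneg (fun t => by positivity) (bt_den_int x hε)]
    have : Function.support (fun t : ℝ => ((x - t) ^ 2 + ε ^ 2)⁻¹) = univ := by
      ext t; simp only [Function.mem_support, mem_univ, iff_true]; positivity
    rw [this]; simp
  refine ⟨∫ t, ((a - t) ^ 2 + 1 ^ 2)⁻¹ ∂τ, hdpos a one_pos, ?_⟩
  intro x ε hax hx hε hε1
  set D := ∫ t, ((x - t) ^ 2 + ε ^ 2)⁻¹ ∂τ with hD
  have hD0 : 0 < D := hdpos x hε
  have hDd : ∫ t, ((a - t) ^ 2 + 1 ^ 2)⁻¹ ∂τ ≤ D := by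
    refine integral_mono_ae (bt_den_int a one_pos) (bt_den_int x hε) ?_
    filter_upwards [bt_ae_nonneg hs] with t ht
    show ((a - t) ^ 2 + 1 ^ 2)⁻¹ ≤ ((x - t) ^ 2 + ε ^ 2)⁻¹
    gcongr ?_⁻¹
    nlinarith
  have him : (cauchyG τ (x + ε * I)).im = -(ε * D) := bt_G_im x hε
  have hre : (cauchyG τ (x + ε * I)).re ≤ x * D := by
    unfold cauchyG
    have := integral_re (bt_inv_int (τ := τ) x hε)
    simp only [RCLike.re_eq_complex_re] at this
    rw [← this, hD, ← integral_const_mul]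
    refine integral_mono_ae (bt_inv_int (τ := τ) x hε).re ((bt_den_int x hε).const_mul _) ?_
    filter_upwards [bt_ae_nonneg hs] with t ht
    rw [bt_re_inv]
    have : 0 ≤ ((x - t) ^ 2 + ε ^ 2)⁻¹ := by positivity
    gcongr; linarith
  have hns : Complex.normSq (cauchyG τ (x + ε * I)) ≤ D := by
    rw [← Complex.sq_norm]
    have h1 : ‖cauchyG τ (x + ε * I)‖ ≤ ∫ t : ℝ, ‖((x:ℂ) + ε * I - t)⁻¹‖ ∂τ :=
      norm_integral_le_integral_norm _
    have h2 : (∫ t : ℝ, ‖((x:ℂ) + ε * I - t)⁻¹‖ ∂τ) ^ 2 ≤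
        ∫ t : ℝ, ‖((x:ℂ) + ε * I - t)⁻¹‖ ^ 2 ∂τ := by
      refine ConvexOn.map_integral_le (g := fun r : ℝ => r ^ 2) (s := univ) (even_two.convexOn_pow)
        (by fun_prop) isClosed_univ (by simp) (bt_inv_int x hε).norm ?_
      refine (bt_den_int x hε).congr (Eventually.of_forall fun t => ?_)
      exact (bt_normSq_inv x ε t).symm
    simp_rw [bt_normSq_inv] at h2
    exact (pow_le_pow_left₀ (norm_nonneg _) h1 2).trans h2
  generalize cauchyG τ (x + ε * I) = g at *
  have hre0 : g.re < 0 := hre.trans_lt (by nlinarith)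
  have hn : Complex.normSq g = g.re ^ 2 + g.im ^ 2 := by rw [Complex.normSq_apply]; ring
  have hn0 : 0 < Complex.normSq g := by rw [hn]; nlinarith [sq_nonneg g.im]
  rw [Complex.inv_re, Complex.inv_im]
  constructor
  · rw [div_le_iff₀ hn0]; nlinarith
  · rw [him, neg_neg]
    have hx2 : 0 < x ^ 2 := by nlinarith
    have hA : (x * D) ^ 2 ≤ Complex.normSq g := by
      have h5 : x * D < 0 := by nlinarith
      have h6 : (x * D) ^ 2 ≤ g.re ^ 2 := by nlinarith
      rw [hn]; linarith [sq_nonneg g.im]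
    have h3 : ε * D / Complex.normSq g ≤ ε * D / (x * D) ^ 2 := by
      have : 0 < (x * D) ^ 2 := by rw [mul_pow]; positivity
      gcongr
    refine h3.trans ?_
    have : ε * D / (x * D) ^ 2 = ε / (x ^ 2 * D) := by
      field_simp
    rw [this]
    have := hdpos a one_pos
    gcongr

theorem bt_supp {μ ν ρ : Measure ℝ} [IsProbabilityMeasure μ] [IsProbabilityMeasure ν]
    [IsProbabilityMeasure ρ] (hμ : μ (Iio (0:ℝ)) = 0) (hν : ν (Iio (0:ℝ)) = 0)
    (hK : ∀ z : ℂ, 0 < z.im → Ktrans ρ z = Ktrans μ z + Ktrans ν z) : ρ (Iio (0:ℝ)) = 0 := by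
  have main : ∀ a b : ℝ, a < b → b < 0 → ρ (Icc a b) = 0 := by
    intro a b hab hb
    obtain ⟨d1, hd1, h1⟩ := bt_F hμ a
    obtain ⟨d2, hd2, h2⟩ := bt_F hν a
    set C := (1 / (b ^ 2 * d1) + 1 / (b ^ 2 * d2)) / b ^ 2 with hC
    have hb2 : 0 < b ^ 2 := by nlinarith
    have hC0 : 0 ≤ C := by positivity
    have loc : ∀ x ε : ℝ, a ≤ x → x ≤ b → 0 < ε → ε ≤ 1 →
        ρ.real (Icc (x - ε) (x + ε)) ≤ 2 * C * ε ^ 2 := by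
      intro x ε hax hxb hε hε1
      have hx : x < 0 := by linarith
      have hbx : b ^ 2 ≤ x ^ 2 := by nlinarith
      have e1 := h1 x ε hax hx hε hε1
      have e2 := h2 x ε hax hx hε hε1
      have k := hK (x + ε * I) (by simp [hε])
      unfold Ktrans at k
      have k' : (cauchyG ρ (x + ε * I))⁻¹ = (cauchyG μ (x + ε * I))⁻¹ +
          (cauchyG ν (x + ε * I))⁻¹ - (x + ε * I) := by linear_combination -k
      have kre : ((cauchyG ρ (x + ε * I))⁻¹).re ≤ x := by
        rw [k']; simp only [sub_re, add_re, ofReal_re, mul_re, I_re, I_im, ofReal_im, mul_zero,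
          zero_mul, mul_one, sub_zero, add_zero]
        linarith [e1.1, e2.1]
      have kim : ((cauchyG ρ (x + ε * I))⁻¹).im ≤
          ε * (1 / (b ^ 2 * d1) + 1 / (b ^ 2 * d2)) := by
        have f1 : ε / (x ^ 2 * d1) ≤ ε * (1 / (b ^ 2 * d1)) := by
          rw [mul_one_div]; gcongr
        have f2 : ε / (x ^ 2 * d2) ≤ ε * (1 / (b ^ 2 * d2)) := by
          rw [mul_one_div]; gcongr
        rw [k']; simp only [sub_im, add_im, ofReal_im, mul_im, ofReal_re, I_im, mul_one, I_re,
          mul_zero, add_zero, zero_add]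
        linarith [e1.2, e2.2]
      have gim := bt_G_im (τ := ρ) x hε
      have ginv : (cauchyG ρ (x + ε * I)).im =
        -((cauchyG ρ (x + ε * I))⁻¹).im / Complex.normSq ((cauchyG ρ (x + ε * I))⁻¹) := by
        rw [← Complex.inv_im, inv_inv]
      have bound : ε * ∫ t, ((x - t) ^ 2 + ε ^ 2)⁻¹ ∂ρ ≤ ε * C := by
        have : ε * ∫ t, ((x - t) ^ 2 + ε ^ 2)⁻¹ ∂ρ = ((cauchyG ρ (x + ε * I))⁻¹).im /
            Complex.normSq ((cauchyG ρ (x + ε * I))⁻¹) := by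
          rw [gim] at ginv; rw [neg_div] at ginv; linarith
        rw [this]
        generalize (cauchyG ρ (x + ε * I))⁻¹ = f at *
        have hn : b ^ 2 ≤ Complex.normSq f := by
          rw [Complex.normSq_apply]; nlinarith [mul_self_nonneg f.im]
        calc f.im / Complex.normSq f ≤ ε * (1 / (b ^ 2 * d1) + 1 / (b ^ 2 * d2)) / Complex.normSq f := by
              have : 0 < Complex.normSq f := by linarith
              gcongr
          _ ≤ ε * (1 / (b ^ 2 * d1) + 1 / (b ^ 2 * d2)) / b ^ 2 := by gcongr
          _ = ε * C := by rw [hC]; ring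
      have bound' := le_of_mul_le_mul_left bound hε
      have low : (2 * ε ^ 2)⁻¹ * ρ.real (Icc (x - ε) (x + ε)) ≤
          ∫ t, ((x - t) ^ 2 + ε ^ 2)⁻¹ ∂ρ := by
        have : (2 * ε ^ 2)⁻¹ * ρ.real (Icc (x - ε) (x + ε)) =
            ∫ t, (Icc (x - ε) (x + ε)).indicator (fun _ => (2 * ε ^ 2)⁻¹) t ∂ρ := by
          rw [integral_indicator measurableSet_Icc]; simp [mul_comm]
        rw [this]
        refine integral_mono ((integrable_const _).indicator measurableSet_Icc) (bt_den_int x hε) ?_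
        intro t
        by_cases ht : t ∈ Icc (x - ε) (x + ε)
        · rw [indicator_of_mem ht]
          show (2 * ε ^ 2)⁻¹ ≤ ((x - t) ^ 2 + ε ^ 2)⁻¹
          gcongr ?_⁻¹
          have := ht.1; have := ht.2
          nlinarith
        · rw [indicator_of_notMem ht]; positivity
      have := low.trans bound'
      rw [inv_mul_le_iff₀ (by positivity)] at this
      linarith
    have hn : ∀ n : ℕ, (b - a) ≤ n → 0 < n → ρ.real (Icc a b) ≤ 2 * C * (b - a) ^ 2 / n := by
      intro n hn hn0
      have hnR : (0:ℝ) < n := by exact_mod_cast hn0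
      set ε := (b - a) / n with hε
      have hε0 : 0 < ε := div_pos (by linarith) hnR
      have hε1 : ε ≤ 1 := (div_le_one hnR).2 hn
      have hnε : n * ε = b - a := by rw [hε]; field_simp
      have hcov : Icc a b ⊆ ⋃ k ∈ Finset.range n, Icc (a + k * ε - ε) (a + k * ε + ε) := by
        intro x hx
        simp only [mem_iUnion, Finset.mem_range]
        by_cases hxb : x < b
        · have h0 : 0 ≤ (x - a) / ε := div_nonneg (by linarith [hx.1]) hε0.le
          refine ⟨⌊(x - a) / ε⌋₊, ?_, ?_⟩
          · rw [Nat.floor_lt h0, div_lt_iff₀ hε0]; linarith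
          · have u1 := Nat.floor_le h0
            have u2 := Nat.lt_floor_add_one ((x - a) / ε)
            rw [le_div_iff₀ hε0] at u1
            rw [div_lt_iff₀ hε0] at u2
            constructor <;> nlinarith
        · have hxb' : x = b := le_antisymm hx.2 (not_lt.1 hxb)
          refine ⟨n - 1, by omega, ?_⟩
          have : ((n - 1 : ℕ) : ℝ) = n - 1 := by rw [Nat.cast_sub hn0]; simp
          rw [this]
          constructor <;> nlinarith
      calc ρ.real (Icc a b) ≤ ρ.real (⋃ k ∈ Finset.range n, Icc (a + k * ε - ε) (a + k * ε + ε)) :=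
            measureReal_mono hcov (measure_ne_top _ _)
        _ ≤ ∑ k ∈ Finset.range n, ρ.real (Icc (a + k * ε - ε) (a + k * ε + ε)) :=
            measureReal_biUnion_finset_le _ _
        _ ≤ ∑ k ∈ Finset.range n, 2 * C * ε ^ 2 := by
            refine Finset.sum_le_sum fun k hk => ?_
            have hk' : (k:ℝ) ≤ n := by exact_mod_cast (Finset.mem_range.1 hk).le
            refine loc _ _ ?_ ?_ hε0 hε1
            · have : 0 ≤ k * ε := by positivity
              linarith
            · nlinarith
        _ = 2 * C * (b - a) ^ 2 / n := by
            rw [Finset.sum_const, Finset.card_range, nsmul_eq_mul, hε]; field_simp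
    have hlim : Tendsto (fun n : ℕ => 2 * C * (b - a) ^ 2 / n) atTop (nhds 0) :=
      tendsto_const_div_atTop_nhds_zero_nat _
    have : ρ.real (Icc a b) ≤ 0 := by
      refine ge_of_tendsto hlim ?_
      filter_upwards [eventually_ge_atTop (⌈b - a⌉₊ + 1)] with n hn'
      refine hn n ?_ (by omega)
      have := Nat.le_ceil (b - a)
      have h3 : ((⌈b - a⌉₊ + 1 : ℕ) : ℝ) ≤ n := by exact_mod_cast hn'
      push_cast at h3
      linarith
    have h0 : ρ.real (Icc a b) = 0 := le_antisymm this measureReal_nonneg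
    exact (measureReal_eq_zero_iff).1 h0
  have hU : Iio (0:ℝ) ⊆ ⋃ n : ℕ, Icc (-((n:ℝ) + 2)) (-(1 / ((n:ℝ) + 1))) := by
    intro x hx
    have hx' : x < 0 := hx
    obtain ⟨n, hn⟩ := exists_nat_gt (max (-x) (1 / (-x)))
    have hn1 := (le_max_left _ _).trans_lt hn
    have hn2 := (le_max_right _ _).trans_lt hn
    rw [mem_iUnion]
    refine ⟨n, by linarith, ?_⟩
    have : 1 / ((n:ℝ) + 1) ≤ -x := by
      rw [div_le_iff₀ (by positivity)]
      rw [div_lt_iff₀ (by linarith)] at hn2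
      nlinarith
    linarith
  refine measure_mono_null hU (measure_iUnion_null fun n => main _ _ ?_ ?_)
  · have : 1 / ((n:ℝ) + 1) ≤ 1 := by
      rw [div_le_one (by positivity)]; linarith [Nat.cast_nonneg (α := ℝ) n]
    linarith [Nat.cast_nonneg (α := ℝ) n]
  · have : 0 < 1 / ((n:ℝ) + 1) := by positivity
    linarith

end

open MeasureTheory Filter Set Complex Asymptotics
noncomputable section

theorem bk_tend {w : ℂ} (hw : w.im ≠ 0) : Tendsto (bk w) (coclosedCompact ℝ) (nhds (-1)) := by
  rw [coclosedCompact_eq_cocompact]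
  have h1 : Tendsto (fun s : ℝ => w - (s:ℂ)) (cocompact ℝ) (cocompact ℂ) := by
    have h2 : Tendsto (fun s : ℝ => (s:ℂ)) (cocompact ℝ) (cocompact ℂ) :=
      Complex.isometry_ofReal.isClosedEmbedding.tendsto_cocompact
    exact (Homeomorph.subLeft w).isClosedEmbedding.tendsto_cocompact.comp h2
  have h3 : Tendsto (fun s : ℝ => -1 + w * (w - (s:ℂ))⁻¹) (cocompact ℝ) (nhds (-1 + w * 0)) :=
    tendsto_const_nhds.add (tendsto_const_nhds.mul ((Metric.cobounded_eq_cocompact (α := ℂ) ▸ tendsto_inv₀_cobounded).comp h1))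
  rw [mul_zero, add_zero] at h3
  refine h3.congr fun s => ?_
  have := bk_ne hw s
  unfold bk
  field_simp
  ring

def bkap (w : {w : ℂ // w.im ≠ 0}) : C(OnePoint ℝ, ℂ) :=
  OnePoint.continuousMapMk ⟨bk w.1, bk_cont w.2⟩ (-1) (bk_tend w.2)

theorem bkap_coe (w : {w : ℂ // w.im ≠ 0}) (s : ℝ) : bkap w (s : OnePoint ℝ) = bk w.1 s := rfl
theorem bkap_inf (w : {w : ℂ // w.im ≠ 0}) : bkap w OnePoint.infty = -1 := rfl

def bW : Set C(OnePoint ℝ, ℂ) := {f | ∃ w : {w : ℂ // w.im ≠ 0}, w.1.re ≠ 0 ∧ f = bkap w}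

def bS : Submodule ℂ C(OnePoint ℝ, ℂ) := Submodule.span ℂ (insert 1 bW)

theorem bkap_mul (w v : {w : ℂ // w.im ≠ 0}) (h : w ≠ v) :
    bkap w * bkap v = (w.1 / (v.1 - w.1)) • bkap w - (v.1 / (v.1 - w.1)) • bkap v := by
  have h' : w.1 ≠ v.1 := fun e => h (Subtype.ext e)
  have h3 : v.1 - w.1 ≠ 0 := sub_ne_zero.2 h'.symm
  ext x
  induction x using OnePoint.rec with
  | infty =>
    simp only [ContinuousMap.mul_apply, ContinuousMap.sub_apply, ContinuousMap.smul_apply, bkap_inf,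
      smul_eq_mul]
    field_simp
    ring
  | coe x =>
    simp only [ContinuousMap.mul_apply, ContinuousMap.sub_apply, ContinuousMap.smul_apply, bkap_coe,
      smul_eq_mul]
    rw [bk_mul w.2 v.2 h' x]
    field_simp

theorem bkap_mem {w : {w : ℂ // w.im ≠ 0}} (hw : w.1.re ≠ 0) : bkap w ∈ bS :=
  Submodule.subset_span (mem_insert_of_mem _ ⟨w, hw, rfl⟩)

theorem bkap_mul_mem {w v : {w : ℂ // w.im ≠ 0}} (hw : w.1.re ≠ 0) (hv : v.1.re ≠ 0) :
    bkap w * bkap v ∈ bS.topologicalClosure := by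
  have key : ∀ w v : {w : ℂ // w.im ≠ 0}, w.1.re ≠ 0 → v.1.re ≠ 0 → w ≠ v →
      bkap w * bkap v ∈ bS := fun w v hw hv h => by
    rw [bkap_mul w v h]
    exact bS.sub_mem (bS.smul_mem _ (bkap_mem hw)) (bS.smul_mem _ (bkap_mem hv))
  by_cases h : w = v
  · subst h
    clear hv
    let u : ℕ → {w : ℂ // w.im ≠ 0} := fun n => ⟨w.1 + ((1 / ((n:ℝ) + 1) : ℝ) : ℂ), by
      simpa using w.2⟩
    have hu : ∀ n, (u n).1 = w.1 + ((1 / ((n:ℝ) + 1) : ℝ) : ℂ) := fun n => rfl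
    have hlim0 : Tendsto (fun n : ℕ => 1 / ((n:ℝ) + 1)) atTop (nhds 0) :=
      tendsto_one_div_add_atTop_nhds_zero_nat
    have hlim : Tendsto (fun n => bkap (u n)) atTop (nhds (bkap w)) := by
      obtain ⟨C, hC, hb⟩ := bk_bound w.2
      have hi : 0 < |w.1.im| := abs_pos.2 w.2
      rw [tendsto_iff_norm_sub_tendsto_zero]
      have h2 : Tendsto (fun n : ℕ => (1 / ((n:ℝ) + 1)) * (C / |w.1.im|)) atTop (nhds 0) := by
        simpa using hlim0.mul_const (C / |w.1.im|)
      refine squeeze_zero (fun _ => norm_nonneg _) (fun n => ?_) h2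
      rw [ContinuousMap.norm_le _ (by positivity)]
      intro x
      induction x using OnePoint.rec with
      | infty =>
        simp only [ContinuousMap.sub_apply, bkap_inf, sub_self, norm_zero]; positivity
      | coe x =>
        simp only [ContinuousMap.sub_apply, bkap_coe]
        have e1 := bk_ne w.2 x
        have e2 := bk_ne (u n).2 x
        have e : bk (u n).1 x - bk w.1 x = (w.1 - (u n).1) * (bk w.1 x * ((u n).1 - x)⁻¹) := by
          unfold bk; field_simp; ring
        have h1 : |w.1.im| ≤ ‖(u n).1 - x‖ := by
          have := Complex.abs_im_le_norm ((u n).1 - x)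
          simpa [hu] using this
        rw [e, norm_mul, norm_mul, norm_inv, ← div_eq_mul_inv]
        have e3 : ‖w.1 - (u n).1‖ = 1 / ((n:ℝ) + 1) := by
          rw [hu, sub_add_cancel_left, norm_neg, Complex.norm_real, Real.norm_of_nonneg]
          positivity
        rw [e3]
        have := (hb x).trans (mul_le_of_le_one_right hC (min_le_left _ _))
        gcongr
    have hlim' := hlim.const_mul (bkap w)
    refine bS.isClosed_topologicalClosure.mem_of_tendsto hlim' ?_
    have hre : ∀ᶠ n in atTop, (u n).1.re ≠ 0 := by
      have : Tendsto (fun n => (u n).1.re) atTop (nhds w.1.re) := by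
        have := (tendsto_const_nhds (x := w.1.re)).add hlim0
        rw [add_zero] at this
        refine this.congr fun n => ?_
        rw [hu, add_re, ofReal_re]
      exact this.eventually_ne hw
    filter_upwards [hre] with n hn
    refine bS.le_topologicalClosure (key _ _ hw hn fun e => ?_)
    have := congrArg (fun z : {w : ℂ // w.im ≠ 0} => z.1.re) e
    simp only [hu, add_re, ofReal_re] at this
    have h0 : 0 < 1 / ((n:ℝ) + 1) := by positivity
    linarith
  · exact bS.le_topologicalClosure (key _ _ hw hv h)

theorem bkap_mul_mem' {w : {w : ℂ // w.im ≠ 0}} (hw : w.1.re ≠ 0) {f : C(OnePoint ℝ, ℂ)}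
    (hf : f ∈ bS.topologicalClosure) : bkap w * f ∈ bS.topologicalClosure := by
  have h1 : ∀ f ∈ bS, bkap w * f ∈ bS.topologicalClosure := by
    intro f hf
    unfold bS at hf
    induction hf using Submodule.span_induction with
    | mem x hx =>
      rcases hx with rfl | ⟨v, hv, rfl⟩
      · rw [mul_one]; exact bS.le_topologicalClosure (bkap_mem hw)
      · exact bkap_mul_mem hw hv
    | zero => rw [mul_zero]; exact Submodule.zero_mem _
    | add x y _ _ hx hy => rw [mul_add]; exact Submodule.add_mem _ hx hy
    | smul a x _ hx => rw [mul_smul_comm]; exact Submodule.smul_mem _ _ hx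
  have h2 : f ∈ closure (bS : Set C(OnePoint ℝ, ℂ)) := hf
  have h3 := map_mem_closure (f := fun g => bkap w * g) (by fun_prop) h2
    (t := (bS.topologicalClosure : Set C(OnePoint ℝ, ℂ))) (fun g hg => h1 g hg)
  rw [bS.isClosed_topologicalClosure.closure_eq] at h3
  exact h3

theorem bS_dense : bS.topologicalClosure = ⊤ := by
  have hstar : star bW ⊆ bW := by
    rintro f ⟨w, hw, hf⟩
    refine ⟨⟨(starRingEnd ℂ) w.1, by simpa using w.2⟩, by simpa using hw, ?_⟩
    rw [← star_star f, hf]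
    ext x
    induction x using OnePoint.rec with
    | infty => simp [bkap_inf]
    | coe x => simp [bkap_coe, bk]
  have hA : ∀ a ∈ Algebra.adjoin ℂ bW, ∀ f ∈ bS.topologicalClosure,
      a * f ∈ bS.topologicalClosure := by
    intro a ha
    induction ha using Algebra.adjoin_induction with
    | mem x hx => obtain ⟨w, hw, rfl⟩ := hx; exact fun f hf => bkap_mul_mem' hw hf
    | algebraMap r =>
      intro f hf; rw [← Algebra.smul_def]; exact Submodule.smul_mem _ _ hf
    | add x y _ _ hx hy =>
      intro f hf; rw [add_mul]; exact Submodule.add_mem _ (hx f hf) (hy f hf)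
    | mul x y _ _ hx hy => intro f hf; rw [mul_assoc]; exact hx _ (hy f hf)
  have hA' : (StarAlgebra.adjoin ℂ bW : Set C(OnePoint ℝ, ℂ)) ⊆ bS.topologicalClosure := by
    intro a ha
    have h1 : a ∈ (StarAlgebra.adjoin ℂ bW).toSubalgebra := ha
    rw [StarAlgebra.adjoin_toSubalgebra, union_eq_self_of_subset_right hstar] at h1
    have := hA a h1 1 (bS.le_topologicalClosure (Submodule.subset_span (mem_insert _ _)))
    rwa [mul_one] at this
  let w0 : {w : ℂ // w.im ≠ 0} := ⟨1 + I, by simp⟩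
  have hw0 : w0.1.re ≠ 0 := by simp [w0]
  have hinj : Function.Injective (bkap w0) := by
    have a1 : ∀ x : ℝ, bk w0.1 x ≠ -1 := by
      intro x h
      have := bk_ne w0.2 x
      unfold bk at h
      rw [div_eq_iff this] at h
      have h2 : w0.1 = 0 := by linear_combination h
      exact hw0 (by rw [h2]; simp)
    intro x y hxy
    induction x using OnePoint.rec with
    | infty =>
      induction y using OnePoint.rec with
      | infty => rfl
      | coe y => exact (a1 y hxy.symm).elim
    | coe x =>
      induction y using OnePoint.rec with
      | infty => exact (a1 x hxy).elim
      | coe y =>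
        rw [bkap_coe, bkap_coe] at hxy
        have hx := bk_ne w0.2 x
        have hy := bk_ne w0.2 y
        unfold bk at hxy
        rw [div_eq_div_iff hx hy] at hxy
        have h2 : w0.1 * ((x:ℂ) - y) = 0 := by linear_combination hxy
        rcases mul_eq_zero.1 h2 with h | h
        · exact (hw0 (by rw [h]; simp)).elim
        · rw [sub_eq_zero] at h
          rw [Complex.ofReal_injective h]
  have hsep : (StarAlgebra.adjoin ℂ bW).SeparatesPoints := by
    intro x y hxy
    refine ⟨bkap w0, ⟨bkap w0, ?_, rfl⟩, fun h => hxy (hinj h)⟩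
    exact StarAlgebra.subset_adjoin ℂ _ ⟨w0, hw0, rfl⟩
  have htop := ContinuousMap.starSubalgebra_topologicalClosure_eq_top_of_separatesPoints _ hsep
  rw [eq_top_iff]
  intro f _
  have hf : f ∈ (StarAlgebra.adjoin ℂ bW).topologicalClosure := by rw [htop]; trivial
  have hf' : f ∈ closure (StarAlgebra.adjoin ℂ bW : Set C(OnePoint ℝ, ℂ)) := hf
  exact closure_minimal hA' bS.isClosed_topologicalClosure hf'

end

open MeasureTheory Filter Set Complex Asymptotics
noncomputable section

def bF (N : ℕ) (s : ℝ) : ℝ := ∏ k ∈ Finset.range N, s ^ 2 / (s ^ 2 + ((k:ℝ) + 1) ^ 2)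

theorem bF_cont (N : ℕ) : Continuous (bF N) := by
  unfold bF
  refine continuous_finsetProd _ fun k _ => ?_
  exact Continuous.div (by fun_prop) (by fun_prop) fun s => by positivity

theorem bF_nonneg (N : ℕ) (s : ℝ) : 0 ≤ bF N s := Finset.prod_nonneg fun k _ => by positivity

theorem bF_le_one (N : ℕ) (s : ℝ) : bF N s ≤ 1 := by
  refine Finset.prod_le_one (fun k _ => by positivity) fun k _ => ?_
  rw [div_le_one (by positivity)]
  nlinarith [sq_nonneg ((k:ℝ) + 1)]

theorem bF_le_pow (N : ℕ) (s : ℝ) : bF N s ≤ (s ^ 2) ^ N := by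
  have : (s ^ 2) ^ N = ∏ k ∈ Finset.range N, s ^ 2 := by simp
  rw [this]
  refine Finset.prod_le_prod (fun k _ => by positivity) fun k _ => ?_
  refine div_le_self (sq_nonneg _) ?_
  have : (0:ℝ) ≤ k := by positivity
  nlinarith [sq_nonneg s]

theorem bF_pos (N : ℕ) {s : ℝ} (hs : s ≠ 0) : 0 < bF N s :=
  Finset.prod_pos fun k _ => by positivity

theorem bF_abs (N : ℕ) (s : ℝ) : bF N |s| = bF N s := by unfold bF; simp only [sq_abs]

theorem bF_tend (N : ℕ) : Tendsto (bF N) atTop (nhds 1) := by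
  unfold bF
  rw [show nhds (1:ℝ) = nhds (∏ k ∈ Finset.range N, (1:ℝ)) by simp]
  refine tendsto_finsetProd _ fun k _ => ?_
  have h1 : Tendsto (fun s : ℝ => s ^ 2 + ((k:ℝ) + 1) ^ 2) atTop atTop :=
    tendsto_atTop_add_const_right _ _ (tendsto_pow_atTop (by norm_num))
  have h2 : Tendsto (fun s : ℝ => 1 - ((k:ℝ) + 1) ^ 2 * (s ^ 2 + ((k:ℝ) + 1) ^ 2)⁻¹) atTop
      (nhds (1 - ((k:ℝ) + 1) ^ 2 * 0)) :=
    tendsto_const_nhds.sub (tendsto_const_nhds.mul (tendsto_inv_atTop_zero.comp h1))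
  rw [mul_zero, sub_zero] at h2
  refine h2.congr fun s => ?_
  have : s ^ 2 + ((k:ℝ) + 1) ^ 2 ≠ 0 := by positivity
  field_simp
  ring

def bs0 (N : ℕ) : Finset ℂ :=
  (Finset.range N).image (fun k : ℕ => ((k:ℂ) + 1) * I) ∪
  (Finset.range N).image (fun k : ℕ => -(((k:ℂ) + 1) * I))

theorem bs0_inj1 : Function.Injective (fun k : ℕ => ((k:ℂ) + 1) * I) := by
  intro a b h
  simpa using h

theorem bs0_inj2 : Function.Injective (fun k : ℕ => -(((k:ℂ) + 1) * I)) := by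
  intro a b h
  simpa using h

theorem bs0_disj (N : ℕ) : Disjoint ((Finset.range N).image (fun k : ℕ => ((k:ℂ) + 1) * I))
    ((Finset.range N).image (fun k : ℕ => -(((k:ℂ) + 1) * I))) := by
  rw [Finset.disjoint_left]
  intro w h1 h2
  rw [Finset.mem_image] at h1 h2
  obtain ⟨a, -, rfl⟩ := h1
  obtain ⟨b, -, h⟩ := h2
  have := congrArg Complex.im h
  simp at this
  have h1 : (0:ℝ) ≤ a := by positivity
  have h2 : (0:ℝ) ≤ b := by positivity
  linarith

theorem bs0_mem {N : ℕ} {w : ℂ} (hw : w ∈ bs0 N) : w.im ≠ 0 ∧ w.re = 0 := by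
  unfold bs0 at hw
  rw [Finset.mem_union, Finset.mem_image, Finset.mem_image] at hw
  rcases hw with ⟨a, -, rfl⟩ | ⟨a, -, rfl⟩
  · have h1 : (0:ℝ) < a + 1 := by positivity
    simp [h1.ne']
  · have h1 : (0:ℝ) < a + 1 := by positivity
    refine ⟨?_, by simp⟩
    simp
    linarith

theorem bs0_card (N : ℕ) : (bs0 N).card = N + N := by
  unfold bs0
  rw [Finset.card_union_of_disjoint (bs0_disj N), Finset.card_image_of_injective _ bs0_inj1,
    Finset.card_image_of_injective _ bs0_inj2, Finset.card_range]

theorem bs0_prod (N : ℕ) (s : ℝ) : ∏ w ∈ bs0 N, bk w s = (bF N s : ℂ) := by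
  unfold bs0
  rw [Finset.prod_union (bs0_disj N), Finset.prod_image bs0_inj1.injOn,
    Finset.prod_image bs0_inj2.injOn, ← Finset.prod_mul_distrib]
  unfold bF
  push_cast
  refine Finset.prod_congr rfl fun k _ => ?_
  have h0 : ((k:ℝ) + 1) ≠ 0 := by positivity
  have h1 : ((k:ℂ) + 1) * I - s ≠ 0 := bk_ne (by simpa using h0) s
  have h2 : -(((k:ℂ) + 1) * I) - s ≠ 0 := bk_ne (by
    rw [neg_im]; refine neg_ne_zero.2 ?_; simpa using h0) s
  unfold bk
  rw [div_mul_div_comm]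
  congr 1
  · ring
  · have := I_sq
    linear_combination (-((k:ℂ) + 1) ^ 2) * this

def bI (N : ℕ) (τ : Measure ℝ) (g : C(OnePoint ℝ, ℂ)) (y : ℝ) : ℂ :=
  ∫ t, (bF N (t / y) : ℂ) * g ((t / y : ℝ) : OnePoint ℝ) ∂τ

theorem bF_int {N : ℕ} {τ : Measure ℝ} [IsProbabilityMeasure τ] (y : ℝ) :
    Integrable (fun t => bF N (t / y)) τ := by
  refine Integrable.of_bound (C := 1) (((bF_cont N).comp (by fun_prop)).aestronglyMeasurable)
    (Eventually.of_forall fun t => ?_)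
  rw [Real.norm_of_nonneg (bF_nonneg _ _)]
  exact bF_le_one _ _

theorem bI_bd (N : ℕ) (g : C(OnePoint ℝ, ℂ)) (s : ℝ) :
    ‖(bF N s : ℂ) * g (s : OnePoint ℝ)‖ ≤ ‖g‖ * bF N s := by
  rw [norm_mul, Complex.norm_real, Real.norm_of_nonneg (bF_nonneg _ _), mul_comm]
  exact mul_le_mul_of_nonneg_right (g.norm_coe_le_norm _) (bF_nonneg _ _)

theorem bI_int {N : ℕ} {τ : Measure ℝ} [IsProbabilityMeasure τ] (g : C(OnePoint ℝ, ℂ)) (y : ℝ) :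
    Integrable (fun t => (bF N (t / y) : ℂ) * g ((t / y : ℝ) : OnePoint ℝ)) τ := by
  refine ((bF_int (N := N) (τ := τ) y).const_mul ‖g‖).mono' (Continuous.aestronglyMeasurable ?_)
    (Eventually.of_forall fun t => bI_bd N g _)
  have h1 : Continuous fun t : ℝ => t / y := by fun_prop
  exact (Complex.continuous_ofReal.comp ((bF_cont N).comp h1)).mul
    (g.continuous.comp (OnePoint.continuous_coe.comp h1))

theorem bI_norm {N : ℕ} {τ : Measure ℝ} [IsProbabilityMeasure τ] (g : C(OnePoint ℝ, ℂ)) (y : ℝ) :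
    ‖bI N τ g y‖ ≤ ‖g‖ * ∫ t, bF N (t / y) ∂τ := by
  unfold bI
  rw [← integral_const_mul]
  exact norm_integral_le_of_norm_le ((bF_int y).const_mul _)
    (Eventually.of_forall fun t => bI_bd N g _)

theorem bI_add {N : ℕ} {τ : Measure ℝ} [IsProbabilityMeasure τ] (g h : C(OnePoint ℝ, ℂ)) (y : ℝ) :
    bI N τ (g + h) y = bI N τ g y + bI N τ h y := by
  unfold bI
  rw [← integral_add (bI_int g y) (bI_int h y)]
  simp only [ContinuousMap.add_apply, mul_add]

theorem bI_smul {N : ℕ} {τ : Measure ℝ} (a : ℂ) (g : C(OnePoint ℝ, ℂ)) (y : ℝ) :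
    bI N τ (a • g) y = a * bI N τ g y := by
  unfold bI
  rw [← integral_const_mul]
  refine integral_congr_ae (Eventually.of_forall fun t => ?_)
  simp only [ContinuousMap.smul_apply, smul_eq_mul]
  ring

theorem bt_weak {N : ℕ} {T : ℝ → ℝ} {μ ν ρ : Measure ℝ} [IsProbabilityMeasure μ]
    [IsProbabilityMeasure ν] [IsProbabilityMeasure ρ]
    (hμ : (fun y => ∫ t, bF N (t / y) ∂μ) =O[atTop] T)
    (hν : (fun y => ∫ t, bF N (t / y) ∂ν) =O[atTop] T)
    (hρ : (fun y => ∫ t, bF N (t / y) ∂ρ) =O[atTop] T)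
    (h1 : (fun y => bI N ρ 1 y - bI N μ 1 y - bI N ν 1 y) =o[atTop] T)
    (h2 : ∀ w : {w : ℂ // w.im ≠ 0}, w.1.re ≠ 0 →
      (fun y => bI N ρ (bkap w) y - bI N μ (bkap w) y - bI N ν (bkap w) y) =o[atTop] T)
    (g : C(OnePoint ℝ, ℂ)) :
    (fun y => bI N ρ g y - bI N μ g y - bI N ν g y) =o[atTop] T := by
  have hspan : ∀ g ∈ bS, (fun y => bI N ρ g y - bI N μ g y - bI N ν g y) =o[atTop] T := by
    intro g hg
    unfold bS at hg
    induction hg using Submodule.span_induction with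
    | mem x hx =>
      rcases hx with rfl | ⟨v, hv, rfl⟩
      · exact h1
      · exact h2 v hv
    | zero => simp [bI]
    | add x y _ _ hx hy =>
      refine (hx.add hy).congr_left fun y => ?_
      simp only [bI_add]; ring
    | smul a x _ hx =>
      refine (hx.const_mul_left a).congr_left fun y => ?_
      simp only [bI_smul]; ring
  obtain ⟨K, hK, hb⟩ := ((hμ.add hν).add hρ).exists_pos
  rw [isBigOWith_iff] at hb
  rw [isLittleO_iff]
  intro ε hε
  have hg : g ∈ bS.topologicalClosure := by rw [bS_dense]; trivial
  have hg' : g ∈ closure (bS : Set C(OnePoint ℝ, ℂ)) := hg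
  obtain ⟨g', hg'S, hd⟩ := Metric.mem_closure_iff.1 hg' (ε / 2 / K) (by positivity)
  rw [dist_eq_norm] at hd
  have h3 := isLittleO_iff.1 (hspan g' hg'S) (half_pos hε)
  filter_upwards [hb, h3] with y hb h3
  have e : ∀ (τ : Measure ℝ) [IsProbabilityMeasure τ],
      bI N τ g y = bI N τ g' y + bI N τ (g - g') y := by
    intro τ _
    rw [← bI_add]; congr 1; abel
  have n : ∀ (τ : Measure ℝ), 0 ≤ ∫ t, bF N (t / y) ∂τ := fun τ =>
    integral_nonneg fun t => bF_nonneg _ _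
  rw [Real.norm_of_nonneg (by have := n μ; have := n ν; have := n ρ; positivity)] at hb
  have hdn : ‖g - g'‖ * K ≤ ε / 2 := by
    rw [← le_div_iff₀ hK]; exact hd.le
  calc ‖bI N ρ g y - bI N μ g y - bI N ν g y‖
      = ‖(bI N ρ g' y - bI N μ g' y - bI N ν g' y) +
        (bI N ρ (g - g') y - bI N μ (g - g') y - bI N ν (g - g') y)‖ := by
        rw [e ρ, e μ, e ν]; congr 1; ring
    _ ≤ ‖bI N ρ g' y - bI N μ g' y - bI N ν g' y‖ + (‖bI N ρ (g - g') y‖ + ‖bI N μ (g - g') y‖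
          + ‖bI N ν (g - g') y‖) := by
        refine (norm_add_le _ _).trans (add_le_add_right ?_ _)
        exact (norm_sub_le _ _).trans (add_le_add_left (norm_sub_le _ _) _)
    _ ≤ ε / 2 * ‖T y‖ + (‖g - g'‖ * (∫ t, bF N (t / y) ∂ρ) + ‖g - g'‖ * (∫ t, bF N (t / y) ∂μ) +
          ‖g - g'‖ * (∫ t, bF N (t / y) ∂ν)) := by
        refine add_le_add h3 (add_le_add (add_le_add (bI_norm _ _) (bI_norm _ _)) (bI_norm _ _))
    _ = ε / 2 * ‖T y‖ + ‖g - g'‖ * ((∫ t, bF N (t / y) ∂μ) + (∫ t, bF N (t / y) ∂ν) +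
          (∫ t, bF N (t / y) ∂ρ)) := by ring
    _ ≤ ε / 2 * ‖T y‖ + ‖g - g'‖ * (K * ‖T y‖) := by gcongr
    _ = ε / 2 * ‖T y‖ + (‖g - g'‖ * K) * ‖T y‖ := by ring
    _ ≤ ε / 2 * ‖T y‖ + (ε / 2) * ‖T y‖ := by gcongr
    _ = ε * ‖T y‖ := by ring

end

open MeasureTheory Filter Set Complex Asymptotics
noncomputable section

def bphi (δ r : ℝ) : ℝ := max 0 (min 1 ((r - 1) / δ))

theorem bphi_cont (δ : ℝ) : Continuous (bphi δ) := by unfold bphi; fun_prop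
theorem bphi_zero {δ r : ℝ} (hδ : 0 < δ) (h : r ≤ 1) : bphi δ r = 0 := by
  unfold bphi
  have : (r - 1) / δ ≤ 0 := div_nonpos_of_nonpos_of_nonneg (by linarith) hδ.le
  exact max_eq_left ((min_le_right _ _).trans this)
theorem bphi_one {δ r : ℝ} (hδ : 0 < δ) (h : 1 + δ ≤ r) : bphi δ r = 1 := by
  unfold bphi
  have : 1 ≤ (r - 1) / δ := by rw [le_div_iff₀ hδ]; linarith
  rw [min_eq_left this]; norm_num
theorem bphi_nonneg (δ r : ℝ) : 0 ≤ bphi δ r := le_max_left _ _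
theorem bphi_le (δ r : ℝ) : bphi δ r ≤ 1 := max_le zero_le_one (min_le_left _ _)

theorem btest (N : ℕ) {δ : ℝ} (hδ : 0 < δ) : ∃ g : C(OnePoint ℝ, ℂ),
    ∀ s : ℝ, (bF N s : ℂ) * g (s : OnePoint ℝ) = (bphi δ |s| : ℂ) := by
  have hpos : ∀ s : ℝ, 0 < bF N (max |s| 1) := fun s =>
    bF_pos N (lt_of_lt_of_le one_pos (le_max_right _ _)).ne'
  have hc : Continuous fun s : ℝ => ((bphi δ |s| / bF N (max |s| 1) : ℝ) : ℂ) := by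
    refine Complex.continuous_ofReal.comp (Continuous.div ((bphi_cont δ).comp (by fun_prop))
      ((bF_cont N).comp (by fun_prop)) fun s => (hpos s).ne')
  have habs : Tendsto (fun s : ℝ => |s|) (cocompact ℝ) atTop := tendsto_norm_cocompact_atTop
  have hmax : Tendsto (fun s : ℝ => max |s| 1) (cocompact ℝ) atTop :=
    tendsto_atTop_mono (fun s => le_max_left _ _) habs
  have ht : Tendsto (fun s : ℝ => ((bphi δ |s| / bF N (max |s| 1) : ℝ) : ℂ)) (coclosedCompact ℝ)
      (nhds ((1:ℝ):ℂ)) := by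
    rw [coclosedCompact_eq_cocompact]
    refine (Complex.continuous_ofReal.tendsto 1).comp ?_
    have h1 : Tendsto (fun s : ℝ => bphi δ |s|) (cocompact ℝ) (nhds 1) := by
      refine tendsto_const_nhds.congr' ?_
      filter_upwards [habs.eventually_ge_atTop (1 + δ)] with s hs
      exact (bphi_one hδ hs).symm
    have h2 := h1.div ((bF_tend N).comp hmax) one_ne_zero
    rw [div_one] at h2
    exact h2
  refine ⟨OnePoint.continuousMapMk ⟨_, hc⟩ _ ht, fun s => ?_⟩
  show (bF N s : ℂ) * ((bphi δ |s| / bF N (max |s| 1) : ℝ) : ℂ) = (bphi δ |s| : ℂ)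
  rcases le_total |s| 1 with h | h
  · rw [bphi_zero hδ h]; simp
  · rw [← ofReal_mul, ← bF_abs N s]
    have h3 := hpos s
    rw [max_eq_left h] at h3 ⊢
    rw [mul_div_cancel₀ _ h3.ne']

theorem bt_sand {N : ℕ} {δ : ℝ} (hδ : 0 < δ) {g : C(OnePoint ℝ, ℂ)}
    (hg : ∀ s : ℝ, (bF N s : ℂ) * g (s : OnePoint ℝ) = (bphi δ |s| : ℂ))
    {τ : Measure ℝ} [IsProbabilityMeasure τ] (hs : τ (Iio (0:ℝ)) = 0) {y : ℝ} (hy : 0 < y) :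
    (τ (Ioi ((1 + δ) * y))).toReal ≤ (bI N τ g y).re ∧ (bI N τ g y).re ≤ (τ (Ioi y)).toReal := by
  have e : (bI N τ g y).re = ∫ t, bphi δ |t / y| ∂τ := by
    unfold bI
    simp_rw [hg]
    rw [integral_complex_ofReal, ofReal_re]
  have hi : Integrable (fun t => bphi δ |t / y|) τ := by
    refine Integrable.of_bound (C := 1) (((bphi_cont δ).comp (by fun_prop)).aestronglyMeasurable)
      (Eventually.of_forall fun t => ?_)
    rw [Real.norm_of_nonneg (bphi_nonneg _ _)]
    exact bphi_le _ _
  have ind : ∀ a : ℝ, (τ (Ioi a)).toReal = ∫ t, (Ioi a).indicator (fun _ => (1:ℝ)) t ∂τ := by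
    intro a
    rw [integral_indicator measurableSet_Ioi]; simp [Measure.real]
  have ii : ∀ a : ℝ, Integrable ((Ioi a).indicator (fun _ => (1:ℝ))) τ := fun a =>
    (integrable_const _).indicator measurableSet_Ioi
  rw [e, ind, ind]
  constructor
  · refine integral_mono (ii _) hi fun t => ?_
    by_cases ht : t ∈ Ioi ((1 + δ) * y)
    · rw [indicator_of_mem ht]
      refine (bphi_one hδ ?_).ge
      refine le_trans ?_ (le_abs_self _)
      rw [le_div_iff₀ hy]; exact (mem_Ioi.1 ht).le
    · rw [indicator_of_notMem ht]; exact bphi_nonneg _ _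
  · refine integral_mono_ae hi (ii _) ?_
    filter_upwards [bt_ae_nonneg hs] with t h0
    by_cases ht : t ∈ Ioi y
    · rw [indicator_of_mem ht]; exact bphi_le _ _
    · rw [indicator_of_notMem ht]
      refine (bphi_zero hδ ?_).le
      rw [abs_of_nonneg (by positivity), div_le_one hy]
      exact not_lt.1 ht

theorem bt_final {T m r : ℝ → ℝ} {α κ : ℝ} (hT : BTail T α)
    (hm : Tendsto (fun y => m y / T y) atTop (nhds κ))
    (h : ∀ δ : ℝ, 0 < δ → ∃ e : ℝ → ℝ, e =o[atTop] T ∧ ∀ᶠ y in atTop,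
      m ((1 + δ) * y) + e y ≤ r y ∧ r ((1 + δ) * y) ≤ m y + e y) :
    Tendsto (fun y => r y / T y) atTop (nhds κ) := by
  have hTn : ∀ y, T y ≠ 0 := fun y => (hT.pos y).ne'
  have hδ : ∀ σ : ℝ, Tendsto (fun δ : ℝ => κ * (1 + δ) ^ σ) (nhdsWithin 0 (Ioi 0)) (nhds κ) := by
    intro σ
    have : ContinuousAt (fun δ : ℝ => κ * (1 + δ) ^ σ) 0 := by
      refine continuousAt_const.mul (ContinuousAt.rpow_const (by fun_prop) (Or.inl (by norm_num)))
    have h2 := this.tendsto.mono_left (nhdsWithin_le_nhds (s := Ioi 0))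
    simpa using h2
  have hscale : ∀ a : ℝ, 0 < a → Tendsto (fun y : ℝ => a * y) atTop atTop := fun a ha =>
    tendsto_id.const_mul_atTop ha
  have hms : ∀ a : ℝ, 0 < a → Tendsto (fun y => m (a * y) / T y) atTop (nhds (κ * a ^ (-α))) := by
    intro a ha
    refine ((hm.comp (hscale a ha)).mul (hT.rv a ha)).congr fun y => ?_
    have := hTn (a * y)
    simp only [Function.comp]
    field_simp
  rw [tendsto_order]
  constructor
  · intro b hb
    obtain ⟨δ, hδb, hδ0⟩ := (((hδ (-α)).eventually_const_lt hb).and self_mem_nhdsWithin).exists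
    have hδ0' : 0 < δ := hδ0
    obtain ⟨e, he, hev⟩ := h δ hδ0'
    have h1 := (hms (1 + δ) (by linarith)).add he.tendsto_div_nhds_zero
    rw [add_zero] at h1
    filter_upwards [h1.eventually_const_lt hδb, hev] with y hy1 hy2
    refine hy1.trans_le ?_
    rw [← add_div]
    have := hT.pos y
    gcongr
    exact hy2.1
  · intro b hb
    obtain ⟨δ, hδb, hδ0⟩ := (((hδ α).eventually_lt_const hb).and self_mem_nhdsWithin).exists
    have hδ0' : 0 < δ := hδ0
    obtain ⟨e, he, hev⟩ := h δ hδ0'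
    have ha : 0 < (1 + δ)⁻¹ := by positivity
    have h2 : Tendsto (fun y => e ((1 + δ)⁻¹ * y) / T y) atTop (nhds (0 * ((1 + δ)⁻¹) ^ (-α))) := by
      refine ((he.tendsto_div_nhds_zero.comp (hscale _ ha)).mul (hT.rv _ ha)).congr fun y => ?_
      have := hTn ((1 + δ)⁻¹ * y)
      simp only [Function.comp]
      rw [div_mul_div_cancel₀ this]
    have h1 := (hms _ ha).add h2
    rw [zero_mul, add_zero, Real.inv_rpow (by positivity), Real.rpow_neg (by positivity),
      inv_inv] at h1
    filter_upwards [h1.eventually_lt_const hδb, (hscale _ ha).eventually hev] with y hy1 hy2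
    refine lt_of_le_of_lt ?_ hy1
    rw [← add_div]
    have := hT.pos y
    have h3 := hy2.2
    rw [← mul_assoc, mul_inv_cancel₀ (by positivity), one_mul] at h3
    gcongr

theorem bt_FO {μ : Measure ℝ} [IsProbabilityMeasure μ] {α : ℝ} (hs : μ (Iio (0:ℝ)) = 0)
    (h : BTail (fun x => (μ (Ioi x)).toReal) α) {N : ℕ} (hN : α < N) :
    (fun y => ∫ t, bF N (t / y) ∂μ) =O[atTop] (fun x => (μ (Ioi x)).toReal) := by
  obtain ⟨C, x0, h1, hC, hb⟩ := bt_J hs h (N := 2 * N) (by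
    push_cast; have : (0:ℝ) ≤ N := by positivity
    linarith)
  refine IsBigO.of_bound C ?_
  filter_upwards [eventually_ge_atTop x0] with y hy
  have hy0 : 0 < y := by linarith
  rw [Real.norm_of_nonneg (integral_nonneg fun t => bF_nonneg _ _),
    Real.norm_of_nonneg ENNReal.toReal_nonneg]
  refine le_trans (integral_mono (bF_int y) (bt_min_int' hy0 _) fun t => ?_) (hb y hy)
  refine le_min (bF_le_one _ _) ((bF_le_pow _ _).trans ?_)
  rw [← pow_mul, ← abs_of_pos hy0, ← abs_div, pow_mul, pow_mul, sq_abs, abs_of_pos hy0]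

theorem bt_core {α : ℝ} {T : ℝ → ℝ} {μ ν ρ : Measure ℝ}
    [IsProbabilityMeasure μ] [IsProbabilityMeasure ν] [IsProbabilityMeasure ρ]
    (hsμ : μ (Iio (0:ℝ)) = 0) (hsν : ν (Iio (0:ℝ)) = 0) (hsρ : ρ (Iio (0:ℝ)) = 0)
    (hT : T = fun x => (μ (Ioi x)).toReal)
    (hμ : BTail T α) (hν : BTail (fun x => (ν (Ioi x)).toReal) α)
    {κ : ℝ} (hbal : Tendsto (fun y => ((μ (Ioi y)).toReal + (ν (Ioi y)).toReal) / T y) atTop (nhds κ))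
    (hνO : (fun x => (ν (Ioi x)).toReal) =O[atTop] T)
    {H : ℂ → ℂ} {Q : Polynomial ℂ} (hQ0 : Q.eval 0 = 0) (hB : BR T H Q)
    {N : ℕ} (hN0 : 0 < N) (hNα : α < N) (hN : (fun y : ℝ => y⁻¹ ^ N) =o[atTop] T)
    (hrel : ∀ w : ℂ, w.im ≠ 0 → ∀ᶠ y : ℝ in atTop,
      bpsi ρ (y * w) = bpsi μ (y * w) + bpsi ν (y * w) + H (y * w)) :
    Tendsto (fun y => (ρ (Ioi y)).toReal / T y) atTop (nhds κ) := by
  have hFμ : (fun y => ∫ t, bF N (t / y) ∂μ) =O[atTop] T := by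
    rw [hT]; exact bt_FO hsμ (hT ▸ hμ) hNα
  have hFν : (fun y => ∫ t, bF N (t / y) ∂ν) =O[atTop] T := (bt_FO hsν hν hNα).trans hνO
  have i1 : ∀ (τ : Measure ℝ) (y : ℝ), bI N τ 1 y = ∫ t, ∏ w ∈ bs0 N, bk w (t / y) ∂τ := by
    intro τ y
    unfold bI
    simp_rw [bs0_prod]
    simp
  have hne : (bs0 N).Nonempty := by rw [← Finset.card_pos, bs0_card]; omega
  have h1 : (fun y => bI N ρ 1 y - bI N μ 1 y - bI N ν 1 y) =o[atTop] T := by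
    simp_rw [i1]
    exact bt_prod hQ0 hB hN hrel (bs0 N) hne (fun w hw => (bs0_mem hw).1) (by rw [bs0_card]; omega)
  have i2 : ∀ (τ : Measure ℝ) (y : ℝ), bI N τ 1 y = ((∫ t, bF N (t / y) ∂τ : ℝ) : ℂ) := by
    intro τ y
    unfold bI
    rw [← integral_complex_ofReal]; simp
  have hFρ : (fun y => ∫ t, bF N (t / y) ∂ρ) =O[atTop] T := by
    have h2 : (fun y => ∫ t, bF N (t / y) ∂ρ - ∫ t, bF N (t / y) ∂μ - ∫ t, bF N (t / y) ∂ν)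
        =O[atTop] T := by
      refine h1.isBigO.norm_left.congr_left ?_ |>.of_norm_left
      intro y
      rw [i2, i2, i2, ← ofReal_sub, ← ofReal_sub, Complex.norm_real]
    refine ((h2.add hFμ).add hFν).congr_left fun y => by ring
  have h2 : ∀ w : {w : ℂ // w.im ≠ 0}, w.1.re ≠ 0 →
      (fun y => bI N ρ (bkap w) y - bI N μ (bkap w) y - bI N ν (bkap w) y) =o[atTop] T := by
    intro w hw
    have hnot : w.1 ∉ bs0 N := fun h => hw (bs0_mem h).2
    have i3 : ∀ (τ : Measure ℝ) (y : ℝ), bI N τ (bkap w) y =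
        ∫ t, ∏ v ∈ insert w.1 (bs0 N), bk v (t / y) ∂τ := by
      intro τ y
      unfold bI
      simp_rw [Finset.prod_insert hnot, bs0_prod, bkap_coe, mul_comm]
    simp_rw [i3]
    refine bt_prod hQ0 hB hN hrel _ (Finset.insert_nonempty _ _) (fun v hv => ?_) ?_
    · rcases Finset.mem_insert.1 hv with rfl | hv
      · exact w.2
      · exact (bs0_mem hv).1
    · rw [Finset.card_insert_of_notMem hnot, bs0_card]; omega
  refine bt_final (m := fun y => (μ (Ioi y)).toReal + (ν (Ioi y)).toReal) hμ hbal fun δ hδ => ?_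
  obtain ⟨g, hg⟩ := btest N hδ
  have hw := bt_weak hFμ hFν hFρ h1 h2 g
  refine ⟨fun y => (bI N ρ g y - bI N μ g y - bI N ν g y).re, ?_, ?_⟩
  · refine IsBigO.trans_isLittleO ?_ hw
    exact IsBigO.of_bound 1 (Eventually.of_forall fun y => by
      rw [one_mul, Real.norm_eq_abs]; exact Complex.abs_re_le_norm _)
  · filter_upwards [eventually_gt_atTop 0] with y hy
    have a1 := bt_sand hδ hg hsμ hy
    have a2 := bt_sand hδ hg hsν hy
    have a3 := bt_sand hδ hg hsρ hy
    simp only [sub_re]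
    constructor <;> linarith [a1.1, a1.2, a2.1, a2.2, a3.1, a3.2]

end

open MeasureTheory Filter Set Complex Asymptotics
noncomputable section

theorem bt_tail_zero (μ : Measure ℝ) [IsProbabilityMeasure μ] :
    Tendsto (fun x => (μ (Ioi x)).toReal) atTop (nhds 0) := by
  have h1 := ProbabilityTheory.tendsto_cdf_atTop μ
  have h2 : Tendsto (fun x => 1 - ProbabilityTheory.cdf μ x) atTop (nhds (1 - 1)) :=
    tendsto_const_nhds.sub h1
  rw [sub_self] at h2
  refine h2.congr fun x => ?_
  rw [ProbabilityTheory.cdf_eq_real, ← compl_Iic]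
  exact (probReal_compl_eq_one_sub measurableSet_Iic).symm

theorem bt_main (α : ℝ) (hα : 0 ≤ α) (c : ℝ) (hc : 0 < c)
    (μ ν : Measure ℝ) [IsProbabilityMeasure μ] [IsProbabilityMeasure ν]
    (hsμ : μ (Set.Iio (0 : ℝ)) = 0) (hsν : ν (Set.Iio (0 : ℝ)) = 0)
    (hregμ : RegVarTail μ α) (hregν : RegVarTail ν α)
    (hbal : Filter.Tendsto
      (fun y : ℝ => (ν (Set.Ioi y)).toReal / (c * (μ (Set.Ioi y)).toReal))
      Filter.atTop (nhds 1))
    (ρ : Measure ℝ) [IsProbabilityMeasure ρ]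
    (hK : ∀ z : ℂ, 0 < z.im → Ktrans ρ z = Ktrans μ z + Ktrans ν z) :
    Filter.Tendsto
      (fun y : ℝ => (ρ (Set.Ioi y)).toReal / ((1 + c) * (μ (Set.Ioi y)).toReal))
      Filter.atTop (nhds 1) := by
  have hμ := hregμ.bt
  have hν := hregν.bt
  have hsρ := bt_supp hsμ hsν hK
  obtain ⟨T, hT⟩ : ∃ T : ℝ → ℝ, T = fun x => (μ (Ioi x)).toReal := ⟨_, rfl⟩
  have hTx : ∀ x, (μ (Ioi x)).toReal = T x := fun x => by rw [hT]
  have hμT : BTail T α := by rw [hT]; exact hμ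
  have hT0 : Tendsto T atTop (nhds 0) := by rw [hT]; exact bt_tail_zero μ
  have hTne : ∀ y, T y ≠ 0 := fun y => (hμT.pos y).ne'
  have hTO : T =O[atTop] fun _ => (1:ℝ) := hT0.isBigO_one ℝ
  have hb1 : Tendsto (fun y => (ν (Ioi y)).toReal / T y) atTop (nhds c) := by
    have := hbal.const_mul c
    rw [mul_one] at this
    refine this.congr fun y => ?_
    have := hTne y
    rw [hTx]
    field_simp
  have hb2 : Tendsto (fun y => ((μ (Ioi y)).toReal + (ν (Ioi y)).toReal) / T y) atTop
      (nhds (1 + c)) := by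
    refine (hb1.const_add 1).congr fun y => ?_
    have := hTne y
    rw [hTx]
    field_simp
  have hνO : (fun x => (ν (Ioi x)).toReal) =O[atTop] T :=
    isBigO_of_div_tendsto_nhds (Eventually.of_forall fun x h => (hTne x h).elim) c hb1
  obtain ⟨N, hNα⟩ := exists_nat_gt α
  have hN0 : 0 < N := by
    have : (0:ℝ) < N := hα.trans_lt hNα
    exact_mod_cast this
  have hN : (fun y : ℝ => y⁻¹ ^ N) =o[atTop] T := by
    refine (hμT.isLittleO hα hNα).congr' ?_ EventuallyEq.rfl
    filter_upwards [eventually_gt_atTop 0] with y hy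
    rw [Real.rpow_neg hy.le, Real.rpow_natCast, inv_pow]
  have hHyp : ∃ Q : Polynomial ℂ, Q.eval 0 = 0 ∧ BR T (fun z => bpsi μ z * bpsi ν z *
        (2 + bpsi μ z + bpsi ν z) * (1 - bpsi μ z * bpsi ν z)⁻¹) Q ∧
      ∀ w : ℂ, w.im ≠ 0 → Tendsto (fun y : ℝ => bpsi μ (y * w)) atTop (nhds 0) ∧
      Tendsto (fun y : ℝ => bpsi ν (y * w)) atTop (nhds 0) := by
    rcases hα.eq_or_lt with rfl | hα0
    · have h0 : (0 : Polynomial ℂ).eval 0 = 0 := by simp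
      have hinv : (fun y : ℝ => y⁻¹) =o[atTop] fun _ => (1:ℝ) :=
        (isLittleO_one_iff ℝ).2 tendsto_inv_atTop_zero
      have hTo : T =o[atTop] fun _ => (1:ℝ) := (isLittleO_one_iff ℝ).2 hT0
      obtain ⟨⟨Q, hQ, hB⟩, hl⟩ := bt_H (T := T) (b := T) hTO hT0
        (by simpa using hinv.mul_isBigO (isBigO_refl T atTop))
        (by simpa using hTo.mul_isBigO (isBigO_refl T atTop)) hN
        (u := bpsi μ) (v := bpsi ν) h0 h0
        (fun w hw => by
          rw [hT]; simpa using bt_psi_zero hsμ hμ w hw)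
        (fun w hw => by
          refine IsBigO.trans ?_ hνO; simpa using bt_psi_zero hsν hν w hw)
      exact ⟨Q, hQ, hB, hl⟩
    · obtain ⟨p, β, hβ0, hβα, hp1, hp2, hβ1, hβ2⟩ := bt_choose hα0
      obtain ⟨P1, hP1, hu⟩ := bt_psi_pos (μ := μ) hβ0 hp1 hp2 (bt_moment hsμ hμ hβ0 hβα)
      obtain ⟨P2, hP2, hv⟩ := bt_psi_pos (μ := ν) hβ0 hp1 hp2 (bt_moment hsν hν hβ0 hβα)
      obtain ⟨⟨Q, hQ, hB⟩, hl⟩ := bt_H (T := T) (b := fun y => y ^ (-β)) hTO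
        (tendsto_rpow_neg_atTop hβ0)
        ((hμT.isLittleO hα hβ1).congr' (by
          filter_upwards [eventually_gt_atTop 0] with y hy
          rw [← Real.rpow_neg_one, ← Real.rpow_add hy]; congr 1; ring) EventuallyEq.rfl)
        ((hμT.isLittleO hα hβ2).congr' (by
          filter_upwards [eventually_gt_atTop 0] with y hy
          rw [← Real.rpow_add hy]; congr 1; ring) EventuallyEq.rfl) hN
        hP1 hP2 hu hv
      exact ⟨Q, hQ, hB, hl⟩
  obtain ⟨Q, hQ0, hB, hl⟩ := hHyp
  have hfin := bt_core hsμ hsν hsρ hT hμT hν hb2 hνO hQ0 hB hN0 hNα hN (by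
    intro w hw
    obtain ⟨l1, l2⟩ := hl w hw
    have m1 : Tendsto (fun y : ℝ => 1 + bpsi μ (y * w)) atTop (nhds (1 + 0)) := l1.const_add 1
    have m2 : Tendsto (fun y : ℝ => 1 + bpsi ν (y * w)) atTop (nhds (1 + 0)) := l2.const_add 1
    have m3 : Tendsto (fun y : ℝ => 1 - bpsi μ (y * w) * bpsi ν (y * w)) atTop
        (nhds (1 - 0 * 0)) := (l1.mul l2).const_sub 1
    filter_upwards [eventually_gt_atTop 0, m1.eventually_ne (b₂ := 0) (by simp), m2.eventually_ne (b₂ := 0) (by simp),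
      m3.eventually_ne (b₂ := 0) (by simp)] with y hy n1 n2 n3
    exact bt_rel hK (bt_im_scale hw hy) n1 n2 n3)
  have h1c : (1 + c) ≠ 0 := by positivity
  have := hfin.const_mul (1 + c)⁻¹
  rw [inv_mul_cancel₀ h1c] at this
  refine this.congr fun y => ?_
  rw [hTx]
  have := hTne y
  field_simp

end

/-- additive Boolean convolution of tail-balanced regularly varying measures. -/
theorem boolean_additive_tail_balanced
    (α : ℝ) (hα : 0 ≤ α) (c : ℝ) (hc : 0 < c)
    (μ ν : Measure ℝ) [IsProbabilityMeasure μ] [IsProbabilityMeasure ν]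
    (hsuppμ : μ (Set.Iio (0 : ℝ)) = 0) (hsuppν : ν (Set.Iio (0 : ℝ)) = 0)
    (hregμ : RegVarTail μ α) (hregν : RegVarTail ν α)
    (hbal : Filter.Tendsto
      (fun y : ℝ => (ν (Set.Ioi y)).toReal / (c * (μ (Set.Ioi y)).toReal))
      Filter.atTop (nhds 1))
    (ρ : Measure ℝ) [IsProbabilityMeasure ρ]
    (hK : ∀ z : ℂ, 0 < z.im → Ktrans ρ z = Ktrans μ z + Ktrans ν z) :
    Filter.Tendsto
      (fun y : ℝ => (ρ (Set.Ioi y)).toReal / ((1 + c) * (μ (Set.Ioi y)).toReal))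
      Filter.atTop (nhds 1) := by
  exact bt_main α hα c hc μ ν hsuppμ hsuppν hregμ hregν hbal ρ hK
end
end
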